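/- arXiv:1609.07601 — 7 statements merged into one kernel-verified Lean document; each statement's English description precedes it below -/
import Mathlib

section
/- Let d ≥ 2 and let F satisfy the standing assumptions and the normalization (A3), and suppose ∫₁^∞ t F''(t) dt = C₀ is finite. Then for every c ∈ (0,1) and every r ∈ [1,2] one has ∫₁^r (F')^{-1}(c/s^{d−1}) ds ≤ (2^d/(c(d−1))) · ∫_{c/r^{d−1}}^{c} (F')^{-1}(z) dz ≤ (2^d/(d−1))·(1 + C₀/F'(1)). -/
open Set Filter Topology MeasureTheory

/-- A strictly increasing function on `(0, ∞)` with limits `0` at `0⁺` and `1` at `∞` takes its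
values in `(0, 1)`. -/
lemma StrictMonoOn.mem_Ioo_of_tendsto {g : ℝ → ℝ} (hg : StrictMonoOn g (Ioi 0))
    (h0 : Tendsto g (𝓝[>] 0) (𝓝 0)) (h1 : Tendsto g atTop (𝓝 1)) {s : ℝ} (hs : 0 < s) :
    g s ∈ Ioo (0 : ℝ) 1 := by
  constructor
  · have hhalf : 0 ≤ g (s / 2) := by
      refine le_of_tendsto h0 ?_
      filter_upwards [Ioo_mem_nhdsGT (half_pos hs)] with t ht
      exact (hg ht.1 (half_pos hs) ht.2).le
    exact hhalf.trans_lt (hg (half_pos hs) hs (half_lt_self hs))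
  · have hsucc : g (s + 1) ≤ 1 := by
      refine ge_of_tendsto h1 ?_
      filter_upwards [eventually_ge_atTop (s + 1)] with t ht
      exact hg.monotoneOn (show (0 : ℝ) < s + 1 by positivity)
        (show (0 : ℝ) < t by linarith) ht
    exact (hg hs (show (0 : ℝ) < s + 1 by positivity) (lt_add_one s)).trans_le hsucc

/-- The substitution `z = c / s ^ n` gives
`∫₁^r f(c / s ^ n) ds ≤ 2 ^ (n + 1) / (c n) ∫_{c / r ^ n}^c f(z) dz` for `r ∈ [1, 2]`. -/
lemma integral_comp_div_pow_le {f : ℝ → ℝ} {c r : ℝ} {n : ℕ} (hn : 0 < n) (hc : 0 < c)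
    (hr : r ∈ Icc (1 : ℝ) 2) (hf : ContinuousOn f (Icc (c / r ^ n) c))
    (hf0 : ∀ z ∈ Icc (c / r ^ n) c, 0 ≤ f z) :
    (∫ s in (1 : ℝ)..r, f (c / s ^ n))
      ≤ 2 ^ (n + 1) / (c * n) * ∫ z in (c / r ^ n)..c, f z := by
  have hpos : ∀ s ∈ Icc (1 : ℝ) r, 0 < s := fun s hs => one_pos.trans_le hs.1
  have hr0 : 0 < r := one_pos.trans_le hr.1
  have hn' : (0 : ℝ) < n := by exact_mod_cast hn
  have hmaps : MapsTo (fun s : ℝ => c / s ^ n) (Icc 1 r) (Icc (c / r ^ n) c) := by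
    intro s hs
    have hs0 := hpos s hs
    refine ⟨?_, div_le_self hc.le (one_le_pow₀ hs.1)⟩
    have := hs.2
    show c / r ^ n ≤ c / s ^ n
    gcongr
  have hcont : ContinuousOn (fun s : ℝ => c / s ^ n) (Icc 1 r) :=
    continuousOn_const.div (by fun_prop) fun s hs => (pow_pos (hpos s hs) n).ne'
  have hcont' : ContinuousOn (fun s : ℝ => c * n / s ^ (n + 1)) (Icc 1 r) :=
    continuousOn_const.div (by fun_prop) fun s hs => (pow_pos (hpos s hs) _).ne'
  have hderiv : ∀ s ∈ Icc (1 : ℝ) r,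
      HasDerivAt (fun s : ℝ => c / s ^ n) (-(c * n / s ^ (n + 1))) s := by
    intro s hs
    have hs0 := (hpos s hs).ne'
    refine ((hasDerivAt_const s c).fun_div (hasDerivAt_pow n s)
      (pow_ne_zero n hs0)).congr_deriv ?_
    obtain ⟨m, rfl⟩ := Nat.exists_eq_succ_of_ne_zero hn.ne'
    rw [Nat.succ_sub_one, Nat.succ_eq_add_one]
    field_simp
    ring
  have hcomp : ContinuousOn (fun s : ℝ => f (c / s ^ n)) (Icc 1 r) := hf.comp hcont hmaps
  have hsub : (∫ s in (1 : ℝ)..r, f (c / s ^ n) * (c * n / s ^ (n + 1)))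
      = ∫ z in (c / r ^ n)..c, f z := by
    have h := intervalIntegral.integral_comp_mul_deriv'' (a := 1) (b := r) (g := f)
      (f := fun s : ℝ => c / s ^ n) (f' := fun s => -(c * n / s ^ (n + 1)))
      (by rwa [uIcc_of_le hr.1])
      (fun s hs => by
        rw [min_eq_left hr.1, max_eq_right hr.1] at hs
        exact (hderiv s (Ioo_subset_Icc_self hs)).hasDerivWithinAt)
      (by rw [uIcc_of_le hr.1]; exact hcont'.neg)
      (by rw [uIcc_of_le hr.1]; exact hf.mono hmaps.image_subset)
    simp only [Function.comp_apply, mul_neg, intervalIntegral.integral_neg, one_pow, div_one] at h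
    rw [intervalIntegral.integral_symm c, ← h, neg_neg]
  rw [← hsub, ← intervalIntegral.integral_const_mul]
  refine intervalIntegral.integral_mono_on hr.1 ?_ ?_ fun s hs => ?_
  · exact hcomp.intervalIntegrable_of_Icc hr.1
  · exact (continuousOn_const.mul (hcomp.mul hcont')).intervalIntegrable_of_Icc hr.1
  · have hs0 := hpos s hs
    have h2 : 1 ≤ 2 ^ (n + 1) / s ^ (n + 1) := by
      rw [one_le_div (by positivity)]
      exact pow_le_pow_left₀ hs0.le (hs.2.trans hr.2) _
    calc f (c / s ^ n) ≤ f (c / s ^ n) * (2 ^ (n + 1) / s ^ (n + 1)) :=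
          le_mul_of_one_le_right (hf0 _ (hmaps hs)) h2
      _ = _ := by field_simp

/-- Under the standing assumptions, (A3), and `∫₁^∞ t F''(t) dt = C₀ < ∞`,
for every `c ∈ (0,1)` and `r ∈ [1,2]`:
`∫₁^r (F')⁻¹(c/s^{d−1}) ds ≤ (2^d/(c(d−1))) ∫_{c/r^{d−1}}^c (F')⁻¹(z) dz
  ≤ (2^d/(d−1)) (1 + C₀/F'(1))`. -/
theorem stmt_2
    (d : ℕ) (hd : 2 ≤ d)
    (F F' F'' : ℝ → ℝ) (C₁ C₂ C₀ : ℝ)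
    (hC₁ : 0 < C₁) (hC₂ : 0 < C₂)
    (hder1 : ∀ s ∈ Ioi (0:ℝ), HasDerivAt F (F' s) s)
    (hder2 : ∀ s ∈ Ioi (0:ℝ), HasDerivAt F' (F'' s) s)
    (hF''cont : ContinuousOn F'' (Ioi 0))
    (hF''pos : ∀ s ∈ Ioi (0:ℝ), 0 < F'' s)
    (hF'0 : Tendsto F' (nhdsWithin 0 (Ioi 0)) (nhds 0))
    (hgrowth : ∀ s ∈ Ioi (0:ℝ), C₁ * s - C₂ ≤ F s ∧ F s ≤ C₂ * (1 + s))
    (hosc : ∀ s, 1 ≤ s → ∀ t ∈ Icc (s/2) (2*s), F'' s / F'' t ≤ C₂)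
    (hF0 : Tendsto F (nhdsWithin 0 (Ioi 0)) (nhds 0))
    (hF'1 : Tendsto F' atTop (nhds 1))
    (hInt : IntegrableOn (fun t => t * F'' t) (Ioi 1))
    (hC₀ : (∫ t in Ioi (1:ℝ), t * F'' t) = C₀)
    (Finv : ℝ → ℝ)
    (hFinv : ∀ s ∈ Ioi (0:ℝ), Finv (F' s) = s)
    (hFinv' : ∀ y ∈ Ioo (0:ℝ) 1, F' (Finv y) = y ∧ 0 < Finv y) :
    ∀ c ∈ Ioo (0:ℝ) 1, ∀ r ∈ Icc (1:ℝ) 2,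
      (∫ s in (1:ℝ)..r, Finv (c / s ^ (d - 1)))
          ≤ 2 ^ d / (c * ((d:ℝ) - 1)) * ∫ z in (c / r ^ (d - 1))..c, Finv z ∧
        2 ^ d / (c * ((d:ℝ) - 1)) * (∫ z in (c / r ^ (d - 1))..c, Finv z)
          ≤ 2 ^ d / ((d:ℝ) - 1) * (1 + C₀ / F' 1) := by
  intro c hc r hr
  have hmono : StrictMonoOn F' (Ioi 0) := by
    refine strictMonoOn_of_deriv_pos (convex_Ioi 0)
      (fun s hs => (hder2 s hs).continuousAt.continuousWithinAt) fun s hs => ?_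
    rw [interior_Ioi] at hs
    rw [(hder2 s hs).deriv]
    exact hF''pos s hs
  have hrange : ∀ s ∈ Ioi (0 : ℝ), F' s ∈ Ioo (0 : ℝ) 1 := fun s hs =>
    hmono.mem_Ioo_of_tendsto hF'0 hF'1 hs
  have hinvMono : StrictMonoOn Finv (Ioo 0 1) := by
    intro x hx y hy hxy
    rw [← hmono.lt_iff_lt (hFinv' x hx).2 (hFinv' y hy).2, (hFinv' x hx).1, (hFinv' y hy).1]
    exact hxy
  have hinvCont : ContinuousOn Finv (Ioo 0 1) := by
    intro y hy
    refine (hinvMono.continuousAt_of_image_mem_nhds (isOpen_Ioo.mem_nhds hy)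
      (mem_of_superset (Ioi_mem_nhds (hFinv' y hy).2) ?_)).continuousWithinAt
    exact fun s hs => ⟨F' s, hrange s hs, hFinv s hs⟩
  obtain ⟨n, rfl⟩ : ∃ n, d = n + 1 := ⟨d - 1, by omega⟩
  have hn : 0 < n := by omega
  have hn' : (0 : ℝ) < n := by exact_mod_cast hn
  have hc0 := hc.1
  have hr0 : 0 < r := one_pos.trans_le hr.1
  simp only [Nat.add_sub_cancel, Nat.cast_add, Nat.cast_one, add_sub_cancel_right]
  have ha0 : 0 < c / r ^ n := by positivity
  have hac : c / r ^ n ≤ c := div_le_self hc0.le (one_le_pow₀ hr.1)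
  have hsub : Icc (c / r ^ n) c ⊆ Ioo 0 1 := fun z hz =>
    ⟨ha0.trans_le hz.1, hz.2.trans_lt hc.2⟩
  refine ⟨integral_comp_div_pow_le hn hc0 hr (hinvCont.mono hsub) fun z hz =>
    (hFinv' z (hsub hz)).2.le, ?_⟩
  generalize c / r ^ n = a at ha0 hac hsub
  have hone0 : (1 : ℝ) ∈ Ioi 0 := mem_Ioi.2 one_pos
  have hF1 := hrange 1 hone0
  have hnonneg : ∀ᵐ t ∂volume.restrict (Ioi (1 : ℝ)), 0 ≤ t * F'' t := by
    filter_upwards [ae_restrict_mem measurableSet_Ioi] with t ht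
    have ht0 : (0 : ℝ) < t := one_pos.trans ht
    exact mul_nonneg ht0.le (hF''pos t ht0).le
  have hC₀nonneg : 0 ≤ C₀ := hC₀ ▸ integral_nonneg_of_ae hnonneg
  have hfinal : (∫ z in a..c, Finv z) ≤ c * (1 + C₀ / F' 1) := by
    -- Below `F' 1` the inverse is at most `1`.
    have hsmall : ∀ b ∈ Icc a c, b ≤ F' 1 → (∫ z in a..b, Finv z) ≤ b - a := by
      intro b hb hb1
      have hsub' : Icc a b ⊆ Ioo 0 1 := (Icc_subset_Icc_right hb.2).trans hsub
      calc (∫ z in a..b, Finv z) ≤ ∫ _ in a..b, (1 : ℝ) := by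
            refine intervalIntegral.integral_mono_on hb.1
              ((hinvCont.mono hsub').intervalIntegrable_of_Icc hb.1) (by simp) fun z hz => ?_
            rw [← hFinv 1 hone0]
            exact hinvMono.monotoneOn (hsub' hz) hF1 (hz.2.trans hb1)
        _ = b - a := by simp
    -- Above `F' 1`, substitute `z = F' t`.
    have hlarge : ∀ b ∈ Icc a c, F' 1 ≤ b → (∫ z in b..c, Finv z) ≤ C₀ := by
      intro b hb hb1
      have hb' := hsub hb
      have hone : 1 ≤ Finv b := by
        rw [← hFinv 1 hone0]
        exact hinvMono.monotoneOn hF1 hb' hb1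
      have hle : Finv b ≤ Finv c := hinvMono.monotoneOn hb' hc hb.2
      have hpos : Icc (Finv b) (Finv c) ⊆ Ioi 0 := fun t ht =>
        one_pos.trans_le (hone.trans ht.1)
      have h := intervalIntegral.integral_comp_mul_deriv'' (a := Finv b) (b := Finv c)
        (g := Finv) (f := F') (f' := F'')
        (by
          rw [uIcc_of_le hle]
          exact fun t ht => (hder2 t (hpos ht)).continuousAt.continuousWithinAt)
        (fun t ht => by
          rw [min_eq_left hle, max_eq_right hle] at ht
          exact (hder2 t (hpos (Ioo_subset_Icc_self ht))).hasDerivWithinAt)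
        (by rw [uIcc_of_le hle]; exact hF''cont.mono hpos)
        (by
          rw [uIcc_of_le hle]
          refine hinvCont.mono ?_
          rintro _ ⟨t, ht, rfl⟩
          exact hrange t (hpos ht))
      rw [(hFinv' b hb').1, (hFinv' c hc).1] at h
      rw [← h, intervalIntegral.integral_of_le hle, ← hC₀]
      have hIoc : Ioc (Finv b) (Finv c) ⊆ Ioi 1 := fun t ht => hone.trans_lt ht.1
      calc (∫ t in Ioc (Finv b) (Finv c), (Finv ∘ F') t * F'' t)
          = ∫ t in Ioc (Finv b) (Finv c), t * F'' t := by
            refine setIntegral_congr_fun measurableSet_Ioc fun t ht => ?_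
            simp only [Function.comp_apply, hFinv t (hpos (Ioc_subset_Icc_self ht))]
        _ ≤ ∫ t in Ioi 1, t * F'' t :=
            setIntegral_mono_set hInt hnonneg hIoc.eventuallyLE
    rcases le_total c (F' 1) with hcF | hcF
    · have h := hsmall c ⟨hac, le_rfl⟩ hcF
      have : 0 ≤ c * (C₀ / F' 1) := mul_nonneg hc0.le (div_nonneg hC₀nonneg hF1.1.le)
      linarith
    · have hCc : C₀ ≤ c * (C₀ / F' 1) := by
        rw [mul_div_assoc', le_div_iff₀ hF1.1, mul_comm c]
        exact mul_le_mul_of_nonneg_left hcF hC₀nonneg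
      rcases le_total a (F' 1) with haF | haF
      · have hmem : F' 1 ∈ Icc a c := ⟨haF, hcF⟩
        rw [← intervalIntegral.integral_add_adjacent_intervals
          ((hinvCont.mono ((Icc_subset_Icc_right hcF).trans hsub)).intervalIntegrable_of_Icc haF)
          ((hinvCont.mono ((Icc_subset_Icc_left haF).trans hsub)).intervalIntegrable_of_Icc hcF)]
        linarith [hsmall _ hmem le_rfl, hlarge _ hmem le_rfl]
      · linarith [hlarge a ⟨le_rfl, hac⟩ haF]
  calc 2 ^ (n + 1) / (c * n) * (∫ z in a..c, Finv z)
      ≤ 2 ^ (n + 1) / (c * n) * (c * (1 + C₀ / F' 1)) := by gcongr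
    _ = 2 ^ (n + 1) / n * (1 + C₀ / F' 1) := by
      have := hF1.1
      field_simp
end

section
/- Let F : (0,∞) → ℝ be C² with F''(s) > 0 for all s > 0, suppose lim_{s→∞} F'(s) = 1 (so that F'' is integrable on (1,∞)), and assume the bounded oscillation condition: there is C₂ > 0 with F''(s)/F''(t) ≤ C₂ for all s ≥ 1 and t ∈ [s/2, 2s]. Then lim_{s→∞} s F''(s) = 0. -/
open Set Filter Topology MeasureTheory

/-- If `F` is `C²` on `(0,∞)` with `F'' > 0`, `F'(s) → 1` as `s → ∞`,
and the bounded oscillation condition holds, then `s F''(s) → 0` as `s → ∞`. -/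
theorem stmt_5
    (F F' F'' : ℝ → ℝ) (C₂ : ℝ) (hC₂ : 0 < C₂)
    (hder1 : ∀ s ∈ Ioi (0:ℝ), HasDerivAt F (F' s) s)
    (hder2 : ∀ s ∈ Ioi (0:ℝ), HasDerivAt F' (F'' s) s)
    (hF''cont : ContinuousOn F'' (Ioi 0))
    (hF''pos : ∀ s ∈ Ioi (0:ℝ), 0 < F'' s)
    (hF'1 : Tendsto F' atTop (nhds 1))
    (hosc : ∀ s, 1 ≤ s → ∀ t ∈ Icc (s/2) (2*s), F'' s / F'' t ≤ C₂) :
    Tendsto (fun s => s * F'' s) atTop (nhds 0) := by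
  have hlim : Tendsto (fun s => C₂ * (F' (2 * s) - F' s)) atTop (nhds 0) := by
    have h2 : Tendsto (fun s => F' (2 * s)) atTop (nhds 1) :=
      hF'1.comp (tendsto_id.const_mul_atTop two_pos)
    simpa using (h2.sub hF'1).const_mul C₂
  refine tendsto_of_tendsto_of_tendsto_of_le_of_le' tendsto_const_nhds hlim ?_ ?_
  · filter_upwards [eventually_gt_atTop 0] with s hs
    exact (mul_pos hs (hF''pos s hs)).le
  · filter_upwards [eventually_ge_atTop 1] with s hs
    have hs0 : 0 < s := by linarith
    obtain ⟨t, ht, hmean⟩ := exists_hasDerivAt_eq_slope F' F'' (by linarith : s < 2 * s)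
      (fun x hx => (hder2 x (hs0.trans_le hx.1)).continuousAt.continuousWithinAt)
      (fun x hx => hder2 x (hs0.trans hx.1))
    have hle := hosc s hs t ⟨by linarith [ht.1], ht.2.le⟩
    rw [div_le_iff₀ (hF''pos t (hs0.trans ht.1))] at hle
    rw [eq_div_iff (by linarith)] at hmean
    calc s * F'' s ≤ s * (C₂ * F'' t) := by gcongr
      _ = C₂ * (F' (2 * s) - F' s) := by rw [← hmean]; ring
end

section
/- Let F satisfy the standing assumptions and the normalization (A3), and set a(s) := F'(s)/s for s > 0. Then lim_{s→∞} s² a'(s) = −1. -/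
open Set Filter Topology MeasureTheory

/-- If `f'` is positive with `f' s / f' t ≤ C` for `s ≥ 1` and `t ∈ [s/2, 2s]`, and `f` has a
finite limit at infinity, then `s * f' s → 0`. -/
theorem tendsto_mul_deriv_zero_of_osc {f f' : ℝ → ℝ} {C l : ℝ}
    (hder : ∀ s ∈ Ioi (0:ℝ), HasDerivAt f (f' s) s)
    (hpos : ∀ s ∈ Ioi (0:ℝ), 0 < f' s)
    (hosc : ∀ s, 1 ≤ s → ∀ t ∈ Icc (s/2) (2*s), f' s / f' t ≤ C)
    (hlim : Tendsto f atTop (𝓝 l)) :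
    Tendsto (fun s => s * f' s) atTop (𝓝 0) := by
  have hdouble : Tendsto (fun s : ℝ => f (2 * s)) atTop (𝓝 l) :=
    hlim.comp (tendsto_id.const_mul_atTop (by norm_num : (0:ℝ) < 2))
  have hupper : Tendsto (fun s => C * (f (2 * s) - f s)) atTop (𝓝 0) := by
    simpa using (hdouble.sub hlim).const_mul C
  refine tendsto_of_tendsto_of_tendsto_of_le_of_le' tendsto_const_nhds hupper ?_ ?_
  · filter_upwards [eventually_gt_atTop 0] with s hs
    exact (mul_pos hs (hpos s hs)).le
  · filter_upwards [eventually_ge_atTop 1] with s hs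
    have hs0 : 0 < s := by linarith
    obtain ⟨t, ⟨hst, hts⟩, ht⟩ := exists_hasDerivAt_eq_slope f f' (by linarith : s < 2 * s)
      (fun x hx => (hder x (hs0.trans_le hx.1)).continuousAt.continuousWithinAt)
      (fun x hx => hder x (hs0.trans hx.1))
    have hslope : f (2 * s) - f s = s * f' t := by
      rw [ht]
      field_simp
      ring
    have hle := (div_le_iff₀ (hpos t (hs0.trans hst))).1 (hosc s hs t ⟨by linarith, hts.le⟩)
    calc s * f' s ≤ s * (C * f' t) := by gcongr
      _ = C * (f (2 * s) - f s) := by rw [hslope]; ring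

/-- Under the standing assumptions on `F` and the normalization (A3),
with `a(s) := F'(s)/s`, one has `s² a'(s) → −1` as `s → ∞`. -/
theorem stmt_6
    (F F' F'' : ℝ → ℝ) (C₁ C₂ : ℝ)
    (hC₁ : 0 < C₁) (hC₂ : 0 < C₂)
    (hder1 : ∀ s ∈ Ioi (0:ℝ), HasDerivAt F (F' s) s)
    (hder2 : ∀ s ∈ Ioi (0:ℝ), HasDerivAt F' (F'' s) s)
    (hF''cont : ContinuousOn F'' (Ioi 0))
    (hF''pos : ∀ s ∈ Ioi (0:ℝ), 0 < F'' s)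
    (hF'0 : Tendsto F' (nhdsWithin 0 (Ioi 0)) (nhds 0))
    (hgrowth : ∀ s ∈ Ioi (0:ℝ), C₁ * s - C₂ ≤ F s ∧ F s ≤ C₂ * (1 + s))
    (hosc : ∀ s, 1 ≤ s → ∀ t ∈ Icc (s/2) (2*s), F'' s / F'' t ≤ C₂)
    (hF0 : Tendsto F (nhdsWithin 0 (Ioi 0)) (nhds 0))
    (hF'1 : Tendsto F' atTop (nhds 1))
    (a : ℝ → ℝ) (ha : ∀ s ∈ Ioi (0:ℝ), a s = F' s / s) :
    Tendsto (fun s => s ^ 2 * deriv a s) atTop (nhds (-1)) := by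
  have hlim := (tendsto_mul_deriv_zero_of_osc hder2 hF''pos hosc hF'1).sub hF'1
  rw [zero_sub] at hlim
  refine hlim.congr' ?_
  filter_upwards [eventually_gt_atTop 0] with s hs
  have haF : a =ᶠ[𝓝 s] F' / id := by
    filter_upwards [Ioi_mem_nhds hs] with x hx using ha x hx
  rw [haF.deriv_eq, ((hder2 s hs).div (hasDerivAt_id s) hs.ne').deriv]
  simp only [id]
  field_simp
end

section
/- Let F satisfy the standing assumptions, the normalization (A3), and condition (A2): ∫₁^∞ t F''(t) dt = ∞. Then there exists a continuous, strictly positive, decreasing function g : [0,∞) → (0,∞) with lim_{s→∞} g(s) = 0 such that ∫₀^∞ t F''(t) g(t) dt = ∞, and such that moreover the function F_g defined by F_g(s) := ∫₀^s (1 − ∫_r^∞ F''(t) g(t) dt) dr is strictly convex, satisfies F_g(0) = 0, lim_{s→0⁺} F_g'(s) = 0, lim_{s→∞} F_g'(s) = 1, satisfies linear growth bounds C₁' s − C₂' ≤ F_g(s) ≤ C₂'(1+s) for some constants C₁', C₂' > 0, satisfies the bounded oscillation condition F_g''(s)/F_g''(t) ≤ 4C₂² for all s ≥ 1 and t ∈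 [s/2, 2s], and satisfies ∫₁^∞ t F_g''(t) dt = ∞. -/
open Set Filter Topology MeasureTheory

/-- A function with nonnegative derivative on a half-line tends to infinity if and only if
the integral of its derivative diverges. -/
theorem lintegral_deriv_eq_top_iff_tendsto_atTop {P p : ℝ → ℝ} {a : ℝ}
    (hderiv : ∀ x ∈ Ici a, HasDerivAt P (p x) x) (hp : ∀ x ∈ Ici a, 0 ≤ p x)
    (hcont : ContinuousOn p (Ici a)) :
    (∫⁻ x in Ioi a, ENNReal.ofReal (p x)) = ⊤ ↔ Tendsto P atTop atTop := by
  have hmeas : AEStronglyMeasurable p (volume.restrict (Ioi a)) :=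
    (hcont.mono Ioi_subset_Ici_self).aestronglyMeasurable measurableSet_Ioi
  have hnonneg : 0 ≤ᵐ[volume.restrict (Ioi a)] p :=
    (ae_restrict_iff' measurableSet_Ioi).2 (ae_of_all _ fun x hx => hp x (Ioi_subset_Ici_self hx))
  have hfin := hasFiniteIntegral_iff_ofReal hnonneg
  have hmono : MonotoneOn P (Ici a) := by
    refine monotoneOn_of_deriv_nonneg (convex_Ici a)
      (fun x hx => (hderiv x hx).continuousAt.continuousWithinAt)
      (fun x hx => (hderiv x (interior_subset hx)).differentiableAt.differentiableWithinAt) ?_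
    intro x hx
    rw [(hderiv x (interior_subset hx)).deriv]
    exact hp x (interior_subset hx)
  constructor
  · intro htop
    have hmono' : Monotone fun x => P (max a x) := fun x y hxy =>
      hmono (le_max_left a x) (le_max_left a y) (max_le_max le_rfl hxy)
    have heq : (fun x => P (max a x)) =ᶠ[atTop] P := by
      filter_upwards [eventually_ge_atTop a] with x hx
      rw [max_eq_right hx]
    rcases tendsto_atTop_of_monotone hmono' with h | ⟨l, hl⟩
    · exact h.congr' heq
    · have hint := integrableOn_Ioi_deriv_of_nonneg' hderiv
        (fun x hx => hp x (Ioi_subset_Ici_self hx)) (hl.congr' heq)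
      exact absurd htop (hfin.1 hint.2).ne
  · intro htends
    by_contra hne
    have hint : IntegrableOn p (Ioi a) := ⟨hmeas, hfin.2 (lt_top_iff_ne_top.2 hne)⟩
    exact not_tendsto_nhds_of_tendsto_atTop htends _
      (tendsto_limUnder_of_hasDerivAt_of_integrableOn_Ioi
        (fun x hx => hderiv x (Ioi_subset_Ici_self hx)) hint)

section Primitive

variable {f : ℝ → ℝ}

/-- The distribution function of a density on the positive half-line is continuous, vanishes
at the origin, is strictly increasing there, tends to one, and is expressed by tail integrals. -/
theorem exists_distribution_function (hint : IntegrableOn f (Ioi 0))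
    (hpos : ∀ t ∈ Ioi (0:ℝ), 0 < f t) (hone : ∫ t in Ioi (0:ℝ), f t = 1) :
    ∃ K : ℝ → ℝ, Continuous K ∧ K 0 = 0 ∧ StrictMonoOn K (Ici 0) ∧ Tendsto K atTop (𝓝 1) ∧
      ∀ r ∈ Ici (0:ℝ), 1 - ∫ t in Ioi r, f t = K r := by
  have hind : Integrable ((Ioi (0:ℝ)).indicator f) :=
    (integrable_indicator_iff measurableSet_Ioi).2 hint
  have hind' : ∀ a b, IntervalIntegrable ((Ioi (0:ℝ)).indicator f) volume a b :=
    fun a b => hind.intervalIntegrable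
  have heq : ∀ r ∈ Ici (0:ℝ), ∫ t in Ioi r, (Ioi (0:ℝ)).indicator f t = ∫ t in Ioi r, f t := by
    intro r hr
    refine setIntegral_congr_fun measurableSet_Ioi fun t ht => ?_
    exact indicator_of_mem (lt_of_le_of_lt (mem_Ici.1 hr) ht) f
  refine ⟨fun r => ∫ t in (0:ℝ)..r, (Ioi (0:ℝ)).indicator f t,
    intervalIntegral.continuous_primitive hind' 0, by simp, ?_, ?_, ?_⟩
  · intro x hx y _ hxy
    have hxy_pos : 0 < ∫ t in x..y, (Ioi (0:ℝ)).indicator f t := by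
      refine intervalIntegral.intervalIntegral_pos_of_pos_on (hind' x y) (fun t ht => ?_) hxy
      have ht0 : t ∈ Ioi (0:ℝ) := lt_of_le_of_lt (mem_Ici.1 hx) ht.1
      rw [indicator_of_mem ht0]
      exact hpos t ht0
    have := intervalIntegral.integral_add_adjacent_intervals (hind' 0 x) (hind' x y)
    dsimp only
    linarith
  · have := intervalIntegral_tendsto_integral_Ioi 0 hind.integrableOn
      (tendsto_id (α := ℝ) (x := atTop))
    rwa [heq 0 self_mem_Ici, hone] at this
  · intro r hr
    have := intervalIntegral.integral_interval_add_Ioi (a := 0) (b := r)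
      hind.integrableOn hind.integrableOn
    rw [heq 0 self_mem_Ici, heq r hr, hone] at this
    linarith

/-- The integrated distribution function of a positive probability density on the half-line is a
strictly convex function of linear growth. -/
theorem integrated_distribution_function_properties (hint : IntegrableOn f (Ioi 0))
    (hpos : ∀ t ∈ Ioi (0:ℝ), 0 < f t) (hone : ∫ t in Ioi (0:ℝ), f t = 1) :
    let Φ : ℝ → ℝ := fun s => ∫ r in (0:ℝ)..s, (1 - ∫ t in Ioi r, f t)
    StrictConvexOn ℝ (Ici 0) Φ ∧
      (∀ s ∈ Ioi (0:ℝ), HasDerivAt Φ (1 - ∫ t in Ioi s, f t) s) ∧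
      Tendsto (fun s => 1 - ∫ t in Ioi s, f t) (𝓝[>] 0) (𝓝 0) ∧
      Tendsto (fun s => 1 - ∫ t in Ioi s, f t) atTop (𝓝 1) ∧
      ∃ c > (0:ℝ), ∃ C > (0:ℝ), ∀ s ∈ Ioi (0:ℝ), c * s - C ≤ Φ s ∧ Φ s ≤ C * (1 + s) := by
  intro Φ
  obtain ⟨K, hKcont, hK0, hKmono, hK1, hKeq⟩ := exists_distribution_function hint hpos hone
  have hKint : ∀ a b, IntervalIntegrable K volume a b := hKcont.intervalIntegrable
  have hΦ : EqOn Φ (fun s => ∫ r in (0:ℝ)..s, K r) (Ici 0) := by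
    intro s hs
    refine intervalIntegral.integral_congr fun r hr => ?_
    rw [uIcc_of_le (mem_Ici.1 hs)] at hr
    exact hKeq r hr.1
  have hder : ∀ s ∈ Ioi (0:ℝ), HasDerivAt Φ (K s) s := fun s hs =>
    (intervalIntegral.integral_hasDerivAt_right (hKint 0 s)
      (hKcont.stronglyMeasurableAtFilter _ _) hKcont.continuousAt).congr_of_eventuallyEq
      (hΦ.eventuallyEq_of_mem (Ici_mem_nhds hs))
  have hK_nonneg : ∀ r ∈ Ici (0:ℝ), 0 ≤ K r := fun r hr =>
    hK0 ▸ hKmono.monotoneOn self_mem_Ici hr (mem_Ici.1 hr)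
  have hK_le : ∀ r ∈ Ici (0:ℝ), K r ≤ 1 := fun r hr => by
    refine ge_of_tendsto hK1 ?_
    filter_upwards [eventually_ge_atTop r] with x hx
    exact hKmono.monotoneOn hr (le_trans (mem_Ici.1 hr) hx) hx
  refine ⟨?_, fun s hs => by rw [hKeq s (Ioi_subset_Ici_self hs)]; exact hder s hs, ?_, ?_, ?_⟩
  · refine StrictMonoOn.strictConvexOn_of_deriv (convex_Ici 0) ?_ ?_
    · exact (intervalIntegral.continuous_primitive hKint 0).continuousOn.congr hΦ
    · rw [interior_Ici]
      exact (hKmono.mono Ioi_subset_Ici_self).congr fun s hs => (hder s hs).deriv.symm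
  · have : Tendsto K (𝓝[>] 0) (𝓝 0) := by
      simpa [hK0] using (hKcont.tendsto 0).mono_left nhdsWithin_le_nhds
    refine this.congr' ?_
    filter_upwards [self_mem_nhdsWithin] with s hs
    exact (hKeq s (Ioi_subset_Ici_self hs)).symm
  · refine hK1.congr' ?_
    filter_upwards [eventually_ge_atTop 0] with s hs
    exact (hKeq s hs).symm
  · obtain ⟨R, hR⟩ := eventually_atTop.1
      ((hK1.eventually (lt_mem_nhds (by norm_num : (1/2 : ℝ) < 1))).and (eventually_ge_atTop 0))
    have hR0 : 0 ≤ R := (hR R le_rfl).2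
    refine ⟨1/2, by norm_num, R/2 + 1, by positivity, fun s hs => ?_⟩
    have hs0 : 0 < s := hs
    rw [hΦ (Ioi_subset_Ici_self hs)]
    have hint_nonneg : ∀ x, 0 ≤ x → 0 ≤ ∫ r in (0:ℝ)..x, K r := fun x hx =>
      intervalIntegral.integral_nonneg hx fun r hr => hK_nonneg r hr.1
    constructor
    · rcases le_total s R with h | h
      · have := hint_nonneg s hs0.le
        dsimp only
        linarith
      · have hle : ∫ _ in R..s, (1/2 : ℝ) ≤ ∫ r in R..s, K r :=
          intervalIntegral.integral_mono_on h intervalIntegrable_const (hKint R s)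
            fun r hr => (hR r hr.1).1.le
        rw [intervalIntegral.integral_const, smul_eq_mul] at hle
        have := intervalIntegral.integral_add_adjacent_intervals (hKint 0 R) (hKint R s)
        have := hint_nonneg R hR0
        dsimp only
        linarith
    · have hle : ∫ r in (0:ℝ)..s, K r ≤ ∫ _ in (0:ℝ)..s, (1 : ℝ) :=
        intervalIntegral.integral_mono_on hs0.le (hKint 0 s) intervalIntegrable_const
          fun r hr => hK_le r hr.1
      rw [intervalIntegral.integral_const, smul_eq_mul] at hle
      dsimp only
      nlinarith [mul_nonneg hR0 hs0.le]

end Primitive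

/-- The function `s ↦ s F'(s) - F(s)`, extended by zero to nonpositive arguments, is a continuous
primitive of `s F''(s)` when `F` and `F'` vanish at the origin. -/
theorem exists_primitive_mul_second_deriv {F F' F'' : ℝ → ℝ}
    (hder1 : ∀ s ∈ Ioi (0:ℝ), HasDerivAt F (F' s) s)
    (hder2 : ∀ s ∈ Ioi (0:ℝ), HasDerivAt F' (F'' s) s)
    (hpos : ∀ s ∈ Ioi (0:ℝ), 0 < F'' s)
    (hF'0 : Tendsto F' (𝓝[>] 0) (𝓝 0)) (hF0 : Tendsto F (𝓝[>] 0) (𝓝 0)) :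
    ∃ Φ : ℝ → ℝ, ContinuousOn Φ (Ici 0) ∧ Φ 0 = 0 ∧ MonotoneOn Φ (Ici 0) ∧
      ∀ s ∈ Ioi (0:ℝ), HasDerivAt Φ (s * F'' s) s := by
  let Φ : ℝ → ℝ := fun s => if 0 < s then s * F' s - F s else 0
  have hΦ : ∀ s ∈ Ioi (0:ℝ), Φ s = s * F' s - F s := fun s hs => if_pos hs
  have hder : ∀ s ∈ Ioi (0:ℝ), HasDerivAt Φ (s * F'' s) s := by
    intro s hs
    have h := ((hasDerivAt_id s).mul (hder2 s hs)).sub (hder1 s hs)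
    refine (h.congr_deriv (by simp)).congr_of_eventuallyEq ?_
    filter_upwards [Ioi_mem_nhds hs] with x hx
    simp [hΦ x hx]
  have hcont : ContinuousOn Φ (Ici 0) := by
    intro s hs
    rcases (mem_Ici.1 hs).eq_or_lt with rfl | h
    · rw [← continuousWithinAt_Ioi_iff_Ici, ContinuousWithinAt]
      have hid : Tendsto (fun s : ℝ => s) (𝓝[>] 0) (𝓝 0) := nhdsWithin_le_nhds
      have hlim : Tendsto (fun s => s * F' s - F s) (𝓝[>] 0) (𝓝 (Φ 0)) := by
        simpa [Φ] using (hid.mul hF'0).sub hF0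
      refine hlim.congr' ?_
      filter_upwards [self_mem_nhdsWithin] with x hx
      exact (hΦ x hx).symm
    · exact (hder s h).continuousAt.continuousWithinAt
  refine ⟨Φ, hcont, by simp [Φ], ?_, hder⟩
  refine (strictMonoOn_of_deriv_pos (convex_Ici 0) hcont ?_).monotoneOn
  intro s hs
  rw [interior_Ici] at hs
  rw [(hder s hs).deriv]
  exact mul_pos hs (hpos s hs)

/-- If `p(2s) ≤ C p(s)` then a primitive of `s p(s)` grows by a bounded factor upon doubling. -/
theorem primitive_two_mul_le {p Φ : ℝ → ℝ} {C : ℝ}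
    (hder : ∀ s ∈ Ioi (0:ℝ), HasDerivAt Φ (s * p s) s) (hmono : MonotoneOn Φ (Ici 0))
    (hΦ0 : Φ 0 = 0) (hC : 0 < C) (hp : ∀ s, 1/2 ≤ s → p (2 * s) ≤ C * p s) {s : ℝ}
    (hs : 1 ≤ s) : Φ (2 * s) ≤ (1 + 4 * C) * Φ s := by
  have hder' : ∀ x ∈ Ici (1/2 : ℝ),
      HasDerivAt (fun x => Φ (2 * x) - 4 * C * Φ x) (4 * x * p (2 * x) - 4 * C * (x * p x)) x := by
    intro x hx
    have hx0 : 0 < x := lt_of_lt_of_le (by norm_num) (mem_Ici.1 hx)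
    have h2 : HasDerivAt (fun x : ℝ => 2 * x) 2 x := by
      simpa using (hasDerivAt_id x).const_mul (2:ℝ)
    have h := ((hder (2 * x) (mem_Ioi.2 (by positivity))).comp x h2).sub
      ((hder x hx0).const_mul (4 * C))
    exact h.congr_deriv (by ring)
  have hanti : AntitoneOn (fun x => Φ (2 * x) - 4 * C * Φ x) (Ici (1/2 : ℝ)) := by
    refine antitoneOn_of_deriv_nonpos (convex_Ici _)
      (fun x hx => (hder' x hx).continuousAt.continuousWithinAt)
      (fun x hx => (hder' x (interior_subset hx)).differentiableAt.differentiableWithinAt) ?_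
    intro x hx
    have hx' : x ∈ Ici (1/2 : ℝ) := interior_subset hx
    have hx0 : 0 < x := lt_of_lt_of_le (by norm_num) (mem_Ici.1 hx')
    rw [(hder' x hx').deriv]
    nlinarith [mul_le_mul_of_nonneg_left (hp x hx') hx0.le]
  have h1 := hanti (mem_Ici.2 le_rfl) (mem_Ici.2 (by linarith)) (by linarith : (1/2 : ℝ) ≤ s)
  have h2 : 0 ≤ Φ (1/2) := hΦ0 ▸ hmono self_mem_Ici (mem_Ici.2 (by norm_num)) (by norm_num)
  have h3 : Φ 1 ≤ Φ s := hmono (mem_Ici.2 zero_le_one) (mem_Ici.2 (by linarith)) hs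
  norm_num at h1 h2
  nlinarith [mul_nonneg hC.le h2]

/-- A nonnegative function whose primitive converges at both ends of a half-line is integrable
there. -/
theorem integrableOn_Ioi_of_deriv_of_tendsto {P p : ℝ → ℝ} {a l m : ℝ}
    (hder : ∀ s ∈ Ioi a, HasDerivAt P (p s) s) (hp : ∀ s ∈ Ioi a, 0 ≤ p s)
    (ha : Tendsto P (𝓝[>] a) (𝓝 m)) (htop : Tendsto P atTop (𝓝 l)) :
    IntegrableOn p (Ioi a) := by
  have hupd : ∀ s ∈ Ioi a, Function.update P a m s = P s := fun s hs =>
    Function.update_of_ne (ne_of_gt hs) m P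
  refine integrableOn_Ioi_deriv_of_nonneg (g := Function.update P a m) (l := l) ?_ ?_ hp ?_
  · rw [← continuousWithinAt_Ioi_iff_Ici, ContinuousWithinAt, Function.update_self]
    refine ha.congr' ?_
    filter_upwards [self_mem_nhdsWithin] with s hs
    exact (hupd s hs).symm
  · intro s hs
    refine (hder s hs).congr_of_eventuallyEq ?_
    filter_upwards [Ioi_mem_nhds hs] with x hx
    exact hupd x hx
  · refine htop.congr' ?_
    filter_upwards [eventually_gt_atTop a] with s hs
    exact (hupd s hs).symm

/-- Under the standing assumptions, (A3) and (A2), there exists a continuous,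
strictly positive, decreasing `g : [0,∞) → (0,∞)` with `g(s) → 0` at infinity such that
`∫₀^∞ t F''(t) g(t) dt = ∞`, and the function
`F_g(s) := ∫₀^s (1 − ∫_r^∞ F''(t) g(t) dt) dr` is strictly convex, vanishes at `0`,
has `F_g'(s) = 1 − ∫_s^∞ F''(t) g(t) dt` with limits `0` at `0⁺` and `1` at `∞`, satisfies
linear growth bounds, satisfies the bounded oscillation condition with constant `4C₂²`,
and satisfies `∫₁^∞ t F_g''(t) dt = ∞`. -/
theorem stmt_7
    (F F' F'' : ℝ → ℝ) (C₁ C₂ : ℝ)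
    (hC₁ : 0 < C₁) (hC₂ : 0 < C₂)
    (hder1 : ∀ s ∈ Ioi (0:ℝ), HasDerivAt F (F' s) s)
    (hder2 : ∀ s ∈ Ioi (0:ℝ), HasDerivAt F' (F'' s) s)
    (hF''cont : ContinuousOn F'' (Ioi 0))
    (hF''pos : ∀ s ∈ Ioi (0:ℝ), 0 < F'' s)
    (hF'0 : Tendsto F' (nhdsWithin 0 (Ioi 0)) (nhds 0))
    (hgrowth : ∀ s ∈ Ioi (0:ℝ), C₁ * s - C₂ ≤ F s ∧ F s ≤ C₂ * (1 + s))
    (hosc : ∀ s, 1 ≤ s → ∀ t ∈ Icc (s/2) (2*s), F'' s / F'' t ≤ C₂)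
    (hF0 : Tendsto F (nhdsWithin 0 (Ioi 0)) (nhds 0))
    (hF'1 : Tendsto F' atTop (nhds 1))
    (hA2 : (∫⁻ t in Ioi (1:ℝ), ENNReal.ofReal (t * F'' t)) = ⊤) :
    ∃ g : ℝ → ℝ,
      ContinuousOn g (Ici 0) ∧ (∀ s ∈ Ici (0:ℝ), 0 < g s) ∧ AntitoneOn g (Ici 0) ∧
      Tendsto g atTop (nhds 0) ∧
      (∫⁻ t in Ioi (0:ℝ), ENNReal.ofReal (t * F'' t * g t)) = ⊤ ∧
      (let Fg : ℝ → ℝ := fun s => ∫ r in (0:ℝ)..s, (1 - ∫ t in Ioi r, F'' t * g t)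
       StrictConvexOn ℝ (Ici 0) Fg ∧
       Fg 0 = 0 ∧
       (∀ s ∈ Ioi (0:ℝ), HasDerivAt Fg (1 - ∫ t in Ioi s, F'' t * g t) s) ∧
       Tendsto (fun s => 1 - ∫ t in Ioi s, F'' t * g t) (nhdsWithin 0 (Ioi 0)) (nhds 0) ∧
       Tendsto (fun s => 1 - ∫ t in Ioi s, F'' t * g t) atTop (nhds 1) ∧
       (∃ C₁' > (0:ℝ), ∃ C₂' > (0:ℝ),
          ∀ s ∈ Ioi (0:ℝ), C₁' * s - C₂' ≤ Fg s ∧ Fg s ≤ C₂' * (1 + s)) ∧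
       (∀ s, 1 ≤ s → ∀ t ∈ Icc (s/2) (2*s),
          (F'' s * g s) / (F'' t * g t) ≤ 4 * C₂ ^ 2) ∧
       (∫⁻ t in Ioi (1:ℝ), ENNReal.ofReal (t * (F'' t * g t))) = ⊤) := by
  obtain ⟨Φ, hΦcont, hΦ0, hΦmono, hΦder⟩ :=
    exists_primitive_mul_second_deriv hder1 hder2 hF''pos hF'0 hF0
  have hsub : Ici (1:ℝ) ⊆ Ioi 0 := fun x hx => lt_of_lt_of_le one_pos (mem_Ici.1 hx)
  have hΦtop : Tendsto Φ atTop atTop :=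
    (lintegral_deriv_eq_top_iff_tendsto_atTop (fun x hx => hΦder x (hsub hx))
      (fun x hx => mul_nonneg (hsub hx).le (hF''pos x (hsub hx)).le)
      (continuousOn_id.mul (hF''cont.mono hsub))).1 hA2
  have hΦnonneg : ∀ s ∈ Ici (0:ℝ), 0 ≤ Φ s := fun s hs =>
    hΦ0 ▸ hΦmono self_mem_Ici hs (mem_Ici.1 hs)
  have hC₂1 : 1 ≤ C₂ := by
    have h := hosc 1 le_rfl 1 ⟨by norm_num, by norm_num⟩
    rwa [div_self (hF''pos 1 (mem_Ioi.2 one_pos)).ne'] at h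
  -- The weight is a multiple of the inverse of `q = √(1 + Φ)`: the product of `q⁻¹` with the
  -- derivative of `Φ` has the unbounded primitive `2 q`.
  let q : ℝ → ℝ := fun s => √(1 + Φ s)
  have hqcont : ContinuousOn q (Ici 0) := (continuousOn_const.add hΦcont).sqrt
  have hq1 : ∀ s ∈ Ici (0:ℝ), 1 ≤ q s := fun s hs =>
    Real.one_le_sqrt.2 (by linarith [hΦnonneg s hs])
  have hqpos : ∀ s ∈ Ici (0:ℝ), 0 < q s := fun s hs => one_pos.trans_le (hq1 s hs)
  have hqmono : MonotoneOn q (Ici 0) := fun x hx y hy hxy =>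
    Real.sqrt_le_sqrt (by linarith [hΦmono hx hy hxy])
  have hqtop : Tendsto q atTop atTop :=
    Real.tendsto_sqrt_atTop.comp (tendsto_atTop_add_const_left _ _ hΦtop)
  have hqder : ∀ s ∈ Ioi (0:ℝ), HasDerivAt (fun s => 2 * q s) (s * (F'' s * (q s)⁻¹)) s := by
    intro s hs
    have hs' := Ioi_subset_Ici_self hs
    have h := (((hΦder s hs).const_add 1).sqrt (by linarith [hΦnonneg s hs'])).const_mul 2
    refine h.congr_deriv ?_
    have := (hqpos s hs').ne'
    change 2 * (s * F'' s / (2 * q s)) = _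
    field_simp
  have hF''int : IntegrableOn F'' (Ioi 0) :=
    integrableOn_Ioi_of_deriv_of_tendsto hder2 (fun s hs => (hF''pos s hs).le) hF'0 hF'1
  have hfcont : ContinuousOn (fun t => F'' t * (q t)⁻¹) (Ioi 0) :=
    hF''cont.mul ((hqcont.mono Ioi_subset_Ici_self).inv₀
      fun s hs => (hqpos s (Ioi_subset_Ici_self hs)).ne')
  have hfpos : ∀ t ∈ Ioi (0:ℝ), 0 < F'' t * (q t)⁻¹ := fun t ht =>
    mul_pos (hF''pos t ht) (inv_pos.2 (hqpos t (Ioi_subset_Ici_self ht)))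
  have hfint : IntegrableOn (fun t => F'' t * (q t)⁻¹) (Ioi 0) := by
    refine hF''int.mono' (hfcont.aestronglyMeasurable measurableSet_Ioi) ?_
    refine (ae_restrict_iff' measurableSet_Ioi).2 (ae_of_all _ fun t ht => ?_)
    rw [Real.norm_of_nonneg (hfpos t ht).le]
    exact mul_le_of_le_one_right (hF''pos t ht).le
      (inv_le_one_of_one_le₀ (hq1 t (Ioi_subset_Ici_self ht)))
  set I : ℝ := ∫ t in Ioi (0:ℝ), F'' t * (q t)⁻¹ with hI
  have hIpos : 0 < I := by
    have hnonneg : 0 ≤ᵐ[volume.restrict (Ioi (0:ℝ))] fun t => F'' t * (q t)⁻¹ :=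
      (ae_restrict_iff' measurableSet_Ioi).2 (ae_of_all _ fun t ht => (hfpos t ht).le)
    rw [hI, setIntegral_pos_iff_support_of_nonneg_ae hnonneg hfint,
      inter_eq_right.2 fun t ht => Function.mem_support.2 (hfpos t ht).ne']
    simp
  have hg_eq : ∀ t, F'' t * (I⁻¹ * (q t)⁻¹) = I⁻¹ * (F'' t * (q t)⁻¹) := fun t => by ring
  have hgint : IntegrableOn (fun t => F'' t * (I⁻¹ * (q t)⁻¹)) (Ioi 0) := by
    simp only [hg_eq]
    exact hfint.const_mul _
  have hgpos : ∀ t ∈ Ioi (0:ℝ), 0 < F'' t * (I⁻¹ * (q t)⁻¹) := fun t ht => by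
    rw [hg_eq]
    exact mul_pos (inv_pos.2 hIpos) (hfpos t ht)
  have hgone : ∫ t in Ioi (0:ℝ), F'' t * (I⁻¹ * (q t)⁻¹) = 1 := by
    simp only [hg_eq]
    rw [integral_const_mul, ← hI, inv_mul_cancel₀ hIpos.ne']
  have hgtop : (∫⁻ t in Ioi (1:ℝ), ENNReal.ofReal (t * (F'' t * (I⁻¹ * (q t)⁻¹)))) = ⊤ := by
    refine (lintegral_deriv_eq_top_iff_tendsto_atTop (P := fun s => I⁻¹ * (2 * q s))
      (fun x hx => ?_) (fun x hx => mul_nonneg (hsub hx).le (hgpos x (hsub hx)).le) ?_).2 ?_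
    · exact ((hqder x (hsub hx)).const_mul I⁻¹).congr_deriv (by ring)
    · simp only [hg_eq]
      exact continuousOn_id.mul (continuousOn_const.mul (hfcont.mono hsub))
    · exact (hqtop.const_mul_atTop two_pos).const_mul_atTop (inv_pos.2 hIpos)
  obtain ⟨hconv, hFgder, hlim0, hlim1, hlin⟩ :=
    integrated_distribution_function_properties hgint hgpos hgone
  refine ⟨fun t => I⁻¹ * (q t)⁻¹,
    continuousOn_const.mul (hqcont.inv₀ fun s hs => (hqpos s hs).ne'),
    fun s hs => mul_pos (inv_pos.2 hIpos) (inv_pos.2 (hqpos s hs)), ?_, ?_, ?_,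
    hconv, intervalIntegral.integral_same, hFgder, hlim0, hlim1, hlin, ?_, hgtop⟩
  · intro x hx y hy hxy
    exact mul_le_mul_of_nonneg_left (inv_anti₀ (hqpos x hx) (hqmono hx hy hxy))
      (inv_pos.2 hIpos).le
  · simpa using hqtop.inv_tendsto_atTop.const_mul I⁻¹
  · simp only [mul_assoc]
    exact top_le_iff.1 (hgtop.ge.trans (lintegral_mono_set (Ioi_subset_Ioi zero_le_one)))
  · intro s hs t ht
    have hs0 : 0 < s := one_pos.trans_le hs
    have ht0 : 0 < t := lt_of_lt_of_le (by positivity) ht.1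
    have hqt : q t ≤ 4 * C₂ * q s := by
      have hdouble : Φ (2 * s) ≤ (1 + 4 * C₂) * Φ s := by
        refine primitive_two_mul_le hΦder hΦmono hΦ0 hC₂ (fun x hx => ?_) hs
        have hx0 : 0 < x := by linarith
        exact (div_le_iff₀ (hF''pos x hx0)).1
          (hosc (2 * x) (by linarith) x ⟨by linarith, by linarith⟩)
      have hts : Φ t ≤ Φ (2 * s) := hΦmono ht0.le (mem_Ici.2 (by positivity)) ht.2
      have hΦs := hΦnonneg s hs0.le
      refine Real.sqrt_le_iff.2 ⟨by have := hqpos s hs0.le; positivity, ?_⟩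
      rw [mul_pow, Real.sq_sqrt (by linarith)]
      have hfactor : 1 + 4 * C₂ ≤ (4 * C₂) ^ 2 := by nlinarith
      nlinarith [mul_le_mul_of_nonneg_right hfactor (by linarith : 0 ≤ 1 + Φ s)]
    have hFt := hosc s hs t ht
    have hqs := hqpos s hs0.le
    have hqt0 := hqpos t ht0.le
    have hF''t := hF''pos t ht0
    calc F'' s * (I⁻¹ * (q s)⁻¹) / (F'' t * (I⁻¹ * (q t)⁻¹))
        = F'' s / F'' t * (q t / q s) := by field_simp
      _ ≤ C₂ * (4 * C₂) :=
          mul_le_mul hFt ((div_le_iff₀ hqs).2 hqt) (by positivity) hC₂.le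
      _ = 4 * C₂ ^ 2 := by ring
end

section
/- Let F satisfy the standing assumptions and the normalization (A3), and define the conjugate function F*(t) := sup_{s > 0} (s t − F(s)) for t ∈ [0,1). Then ∫₁^∞ t F''(t) dt = ∞ if and only if lim_{t→1⁻} F*(t) = ∞. -/
open Set Filter Topology MeasureTheory

/-- The integral `∫₁^∞ G'` of a nonnegative continuous derivative is infinite iff `G` is unbounded
above on `[1, ∞)`. -/
lemma lintegral_Ioi_one_deriv_eq_top_iff {G g : ℝ → ℝ}
    (hG : ∀ s ∈ Ioi (0:ℝ), HasDerivAt G (g s) s) (hg : ContinuousOn g (Ioi 0))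
    (hpos : ∀ s ∈ Ioi (0:ℝ), 0 ≤ g s) :
    (∫⁻ t in Ioi (1:ℝ), ENNReal.ofReal (g t)) = ⊤ ↔ ∀ M, ∃ s, 1 ≤ s ∧ M < G s := by
  have hsub : ∀ b : ℝ, 1 ≤ b → uIcc 1 b ⊆ Ioi (0:ℝ) := fun b hb x hx => by
    rw [uIcc_of_le hb] at hx
    exact lt_of_lt_of_le one_pos hx.1
  have hint : ∀ b : ℝ, 1 ≤ b → IntervalIntegrable g volume 1 b := fun b hb =>
    (hg.mono (hsub b hb)).intervalIntegrable
  have hftc : ∀ b : ℝ, 1 ≤ b → ∫ t in (1:ℝ)..b, g t = G b - G 1 := fun b hb =>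
    intervalIntegral.integral_eq_sub_of_hasDerivAt (fun x hx => hG x (hsub b hb hx)) (hint b hb)
  have hnonneg : 0 ≤ᵐ[volume.restrict (Ioi (1:ℝ))] g :=
    (ae_restrict_iff' measurableSet_Ioi).2 <| .of_forall fun x hx =>
      hpos x (mem_Ioi.2 (one_pos.trans (mem_Ioi.1 hx)))
  have hmeas : AEStronglyMeasurable g (volume.restrict (Ioi (1:ℝ))) :=
    (hg.mono (Ioi_subset_Ioi zero_le_one)).aestronglyMeasurable measurableSet_Ioi
  have hiff : IntegrableOn g (Ioi 1) ↔ (∫⁻ t in Ioi (1:ℝ), ENNReal.ofReal (g t)) < ⊤ := by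
    rw [← hasFiniteIntegral_iff_ofReal hnonneg]
    exact ⟨fun h => h.2, fun h => ⟨hmeas, h⟩⟩
  rw [← not_iff_not, ← ne_eq, ← lt_top_iff_ne_top, ← hiff]
  push Not
  constructor
  · intro h
    refine ⟨G 1 + ∫ t in Ioi (1:ℝ), g t, fun b hb => ?_⟩
    have hle : ∫ t in (1:ℝ)..b, g t ≤ ∫ t in Ioi (1:ℝ), g t := by
      rw [intervalIntegral.integral_of_le hb]
      exact setIntegral_mono_set h hnonneg Ioc_subset_Ioi_self.eventuallyLE
    linarith [hftc b hb]
  · rintro ⟨M, hM⟩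
    refine integrableOn_Ioi_of_intervalIntegral_norm_bounded (M - G 1) 1
      (l := atTop) (b := id) (fun b => ?_) tendsto_id ?_
    · exact ((hg.mono fun x hx => lt_of_lt_of_le one_pos hx.1).integrableOn_Icc (a := 1)
        (b := b)).mono_set Ioc_subset_Icc_self
    · filter_upwards [eventually_ge_atTop (1:ℝ)] with b hb
      have hnorm : ∫ t in (1:ℝ)..b, ‖g t‖ = ∫ t in (1:ℝ)..b, g t :=
        intervalIntegral.integral_congr fun x hx =>
          Real.norm_of_nonneg (hpos x (hsub b hb hx))
      rw [id, hnorm, hftc b hb]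
      linarith [hM b hb]

/-- The tangent line inequality, in the form of Young's inequality at the slope `F' r`. -/
lemma mul_sub_le_of_monotoneOn_deriv {F F' : ℝ → ℝ}
    (hder : ∀ s ∈ Ioi (0:ℝ), HasDerivAt F (F' s) s) (hmono : MonotoneOn F' (Ioi 0))
    {r s : ℝ} (hr : 0 < r) (hs : 0 < s) : s * F' r - F s ≤ r * F' r - F r := by
  have hmvt : ∀ a b : ℝ, 0 < a → a < b → ∃ c ∈ Ioo a b, F b - F a = F' c * (b - a) := by
    intro a b ha hab
    obtain ⟨c, hc, hceq⟩ := exists_hasDerivAt_eq_slope F F' hab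
      (fun x hx => (hder x (ha.trans_le hx.1)).continuousAt.continuousWithinAt)
      (fun x hx => hder x (ha.trans hx.1))
    exact ⟨c, hc, by rw [hceq, div_mul_cancel₀ _ (sub_pos.2 hab).ne']⟩
  rcases lt_trichotomy r s with h | rfl | h
  · obtain ⟨c, hc, heq⟩ := hmvt r s hr h
    have hle := hmono hr (hr.trans hc.1) hc.1.le
    nlinarith [mul_le_mul_of_nonneg_right hle (sub_pos.2 h).le]
  · exact le_rfl
  · obtain ⟨c, hc, heq⟩ := hmvt s r hs h
    have hle := hmono (hs.trans hc.1) hr hc.2.le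
    nlinarith [mul_le_mul_of_nonneg_right hle (sub_pos.2 h).le]

/-- Under the standing assumptions and (A3), with the conjugate function
`F*(t) := sup_{s>0} (st − F(s))` for `t ∈ [0,1)`, one has `∫₁^∞ t F''(t) dt = ∞` if and
only if `F*(t) → ∞` as `t → 1⁻`. -/
theorem stmt_11
    (F F' F'' : ℝ → ℝ) (C₁ C₂ : ℝ)
    (hC₁ : 0 < C₁) (hC₂ : 0 < C₂)
    (hder1 : ∀ s ∈ Ioi (0:ℝ), HasDerivAt F (F' s) s)
    (hder2 : ∀ s ∈ Ioi (0:ℝ), HasDerivAt F' (F'' s) s)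
    (hF''cont : ContinuousOn F'' (Ioi 0))
    (hF''pos : ∀ s ∈ Ioi (0:ℝ), 0 < F'' s)
    (hF'0 : Tendsto F' (nhdsWithin 0 (Ioi 0)) (nhds 0))
    (hgrowth : ∀ s ∈ Ioi (0:ℝ), C₁ * s - C₂ ≤ F s ∧ F s ≤ C₂ * (1 + s))
    (hosc : ∀ s, 1 ≤ s → ∀ t ∈ Icc (s/2) (2*s), F'' s / F'' t ≤ C₂)
    (hF0 : Tendsto F (nhdsWithin 0 (Ioi 0)) (nhds 0))
    (hF'1 : Tendsto F' atTop (nhds 1))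
    (Fstar : ℝ → ℝ)
    (hFstar : ∀ t ∈ Ico (0:ℝ) 1, Fstar t = sSup ((fun s => s * t - F s) '' Ioi 0)) :
    (∫⁻ t in Ioi (1:ℝ), ENNReal.ofReal (t * F'' t)) = ⊤ ↔
      Tendsto Fstar (nhdsWithin 1 (Ico 0 1)) atTop := by
  have hmono : MonotoneOn F' (Ioi 0) := by
    refine monotoneOn_of_deriv_nonneg (convex_Ioi 0)
      (fun x hx => (hder2 x hx).continuousAt.continuousWithinAt) ?_ ?_ <;> rw [interior_Ioi]
    · exact fun x hx => (hder2 x hx).differentiableAt.differentiableWithinAt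
    · exact fun x hx => (hder2 x hx).deriv ▸ (hF''pos x hx).le
  have hF'le : ∀ s, 0 < s → F' s ≤ 1 := fun s hs =>
    ge_of_tendsto hF'1 <| (eventually_ge_atTop s).mono fun x hx => hmono hs (hs.trans_le hx) hx
  have hbound : ∀ t < 1, ∃ r, 1 ≤ r ∧ ∀ s > 0, s * t - F s ≤ r * F' r - F r := by
    intro t ht
    obtain ⟨r, hrt, hr⟩ := ((hF'1.eventually_const_lt ht).and (eventually_ge_atTop 1)).exists
    refine ⟨r, hr, fun s hs => ?_⟩
    have hyoung := mul_sub_le_of_monotoneOn_deriv hder1 hmono (one_pos.trans_le hr) hs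
    linarith [mul_le_mul_of_nonneg_left hrt.le hs.le]
  rw [lintegral_Ioi_one_deriv_eq_top_iff (G := fun s => s * F' s - F s)
    (g := fun s => s * F'' s)
    (fun s hs => by
      have h := ((hasDerivAt_id s).mul (hder2 s hs)).sub (hder1 s hs)
      rw [one_mul, add_sub_cancel_left] at h
      exact h)
    (continuousOn_id.mul hF''cont)
    (fun s hs => (mul_pos hs (hF''pos s hs)).le)]
  constructor
  · intro h
    refine tendsto_atTop.2 fun M => ?_
    obtain ⟨s, hs1, hs⟩ := h M
    have hs0 : 0 < s := one_pos.trans_le hs1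
    have hlim : Tendsto (fun t => s * t - F s) (𝓝[Ico 0 1] 1) (𝓝 (s * 1 - F s)) :=
      tendsto_nhdsWithin_of_tendsto_nhds (Continuous.tendsto (by fun_prop) 1)
    have hlt : M < s * 1 - F s := by
      linarith [mul_le_mul_of_nonneg_left (hF'le s hs0) hs0.le]
    filter_upwards [hlim.eventually_const_lt hlt, self_mem_nhdsWithin] with t hMt ht
    obtain ⟨r, -, hr⟩ := hbound t ht.2
    rw [hFstar t ht]
    exact hMt.le.trans (le_csSup ⟨_, forall_mem_image.2 hr⟩ (mem_image_of_mem _ hs0))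
  · intro h M
    have hne : (𝓝[Ico (0:ℝ) 1] 1).NeBot := by
      rw [nhdsWithin_Ico_eq_nhdsLT zero_lt_one]
      infer_instance
    obtain ⟨t, hMt, ht⟩ := ((h.eventually_gt_atTop M).and self_mem_nhdsWithin).exists
    obtain ⟨r, hr1, hr⟩ := hbound t ht.2
    refine ⟨r, hr1, hMt.trans_le ?_⟩
    rw [hFstar t ht]
    exact csSup_le (nonempty_Ioi.image _) (forall_mem_image.2 hr)
end

section
/- Let d ≥ 2, let G : (0,∞) → ℝ be C² with G''(s) > 0 for all s > 0, lim_{s→0⁺} G'(s) = 0 and lim_{s→∞} G'(s) = 1 (so that (G')^{-1} maps [0,1) onto [0,∞)), and set a_G(s) := G'(s)/s. For r₀ > 0 and δ ∈ (0,1) define b(r) := (G')^{-1}((1−δ)^{d−1} r₀^{d−1}/r^{d−1}) for r ≥ r₀ and ω(x) := ∫_{r₀}^{|x|} b(r) dr for |x| ≥ r₀. Then ω = 0 on the sphere {|x| = r₀}, ∇ω(x) = b(|x|) x/|x| for |x| > r₀, the vector field a_G(|∇ω(x)|)∇ω(x) equals (1−δ)^{d−1} r₀^{d−1} x/|x|^d,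 and div(a_G(|∇ω|)∇ω)(x) = 0 for every x with |x| > r₀. -/
open Set Filter Topology MeasureTheory

/-- Pointwise divergence of a vector field on `ℝ^d`: the sum of the partial derivatives of
its components. -/
noncomputable def diver {d : ℕ} (X : EuclideanSpace ℝ (Fin d) → EuclideanSpace ℝ (Fin d))
    (x : EuclideanSpace ℝ (Fin d)) : ℝ :=
  ∑ i, fderiv ℝ (fun y => X y i) x (EuclideanSpace.single i 1)

/-- The Euclidean norm has gradient `x / ‖x‖` away from the origin. -/
lemma hasFDerivAt_norm_of_ne_zero {E : Type*} [NormedAddCommGroup E] [InnerProductSpace ℝ E]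
    {x : E} (hx : x ≠ 0) :
    HasFDerivAt (fun y : E => ‖y‖) (‖x‖⁻¹ • innerSL ℝ x) x := by
  have hpos : 0 < ‖x‖ := norm_pos_iff.mpr hx
  have h := (hasStrictFDerivAt_norm_sq x).hasFDerivAt.sqrt (by positivity)
  simp only [Real.sqrt_sq (norm_nonneg _)] at h
  convert h using 1
  ext v
  simp
  field_simp

/-- Gradient of a radial function. -/
lemma hasGradientAt_comp_norm {E : Type*} [NormedAddCommGroup E] [InnerProductSpace ℝ E]
    [CompleteSpace E] {f : ℝ → ℝ} {f' : ℝ} {x : E} (hx : x ≠ 0) (hf : HasDerivAt f f' ‖x‖) :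
    HasGradientAt (fun y : E => f ‖y‖) ((f' / ‖x‖) • x) x := by
  rw [hasGradientAt_iff_hasFDerivAt]
  refine (hf.comp_hasFDerivAt x (hasFDerivAt_norm_of_ne_zero hx)).congr_fderiv ?_
  ext v
  simp [div_eq_mul_inv, mul_assoc]

/-- The divergence at a point only depends on the germ of the vector field there. -/
lemma diver_congr {d : ℕ} {X Y : EuclideanSpace ℝ (Fin d) → EuclideanSpace ℝ (Fin d)}
    {x : EuclideanSpace ℝ (Fin d)} (h : X =ᶠ[𝓝 x] Y) : diver X x = diver Y x := by
  refine Finset.sum_congr rfl fun i _ => ?_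
  have hi : (fun y => X y i) =ᶠ[𝓝 x] fun y => Y y i := h.mono fun y hy => by simp only [hy]
  rw [hi.fderiv_eq]

/-- The field `c x / |x|^d` on `ℝ^d` is divergence free away from the origin. -/
lemma diver_div_norm_pow_smul {d : ℕ} (c : ℝ) {x : EuclideanSpace ℝ (Fin d)} (hx : x ≠ 0) :
    diver (fun y => (c / ‖y‖ ^ d) • y) x = 0 := by
  have hpos : 0 < ‖x‖ := norm_pos_iff.mpr hx
  have hterm : ∀ i, fderiv ℝ (fun y : EuclideanSpace ℝ (Fin d) => ((c / ‖y‖ ^ d) • y) i) x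
      (EuclideanSpace.single i 1) = c / ‖x‖ ^ d - c * d / ‖x‖ ^ (d + 2) * x i ^ 2 := by
    intro i
    have hrad : HasDerivAt (fun r : ℝ => c / r ^ d) (-(c * d) / ‖x‖ ^ (d + 1)) ‖x‖ := by
      refine ((hasDerivAt_const ‖x‖ c).div (hasDerivAt_pow d ‖x‖) (by positivity)).congr_deriv ?_
      rcases d with _ | n
      · simp
      · simp only [Nat.add_sub_cancel]
        field_simp
        ring
    have hcoord : HasFDerivAt (fun y : EuclideanSpace ℝ (Fin d) => y i)
        (EuclideanSpace.proj i : EuclideanSpace ℝ (Fin d) →L[ℝ] ℝ) x :=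
      (EuclideanSpace.proj i : EuclideanSpace ℝ (Fin d) →L[ℝ] ℝ).hasFDerivAt
    have h := (hrad.comp_hasFDerivAt x (hasFDerivAt_norm_of_ne_zero hx)).mul hcoord
    have h' : HasFDerivAt (fun y : EuclideanSpace ℝ (Fin d) => ((c / ‖y‖ ^ d) • y) i) _ x := h
    rw [h'.fderiv]
    simp [EuclideanSpace.inner_single_right]
    field_simp
    ring
  simp only [diver, hterm]
  rw [Finset.sum_sub_distrib, ← Finset.mul_sum, ← EuclideanSpace.real_norm_sq_eq]
  simp
  field_simp
  ring

/-- For the radial prototype barrier `ω(x) = ∫_{r₀}^{|x|} b(r) dr` with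
`b(r) = (G')⁻¹((1−δ)^{d−1} r₀^{d−1} / r^{d−1})`: `ω` vanishes on the sphere `{|x| = r₀}`,
`∇ω(x) = b(|x|) x/|x|`, the vector field `a_G(|∇ω|)∇ω` equals
`(1−δ)^{d−1} r₀^{d−1} x/|x|^d`, and `div(a_G(|∇ω|)∇ω) = 0` for `|x| > r₀`. -/
theorem stmt_12
    (d : ℕ) (hd : 2 ≤ d)
    (G G' G'' : ℝ → ℝ)
    (hder1 : ∀ s ∈ Ioi (0:ℝ), HasDerivAt G (G' s) s)
    (hder2 : ∀ s ∈ Ioi (0:ℝ), HasDerivAt G' (G'' s) s)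
    (hG''cont : ContinuousOn G'' (Ioi 0))
    (hG''pos : ∀ s ∈ Ioi (0:ℝ), 0 < G'' s)
    (hG'0 : Tendsto G' (nhdsWithin 0 (Ioi 0)) (nhds 0))
    (hG'1 : Tendsto G' atTop (nhds 1))
    (Ginv : ℝ → ℝ) (hGinv0 : Ginv 0 = 0)
    (hGinv : ∀ s ∈ Ioi (0:ℝ), Ginv (G' s) = s)
    (hGinv' : ∀ y ∈ Ioo (0:ℝ) 1, G' (Ginv y) = y ∧ 0 < Ginv y)
    (hGinvmono : StrictMonoOn Ginv (Ico 0 1)) (hGinvcont : ContinuousOn Ginv (Ico 0 1))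
    (r₀ δ : ℝ) (hr₀ : 0 < r₀) (hδ : δ ∈ Ioo (0:ℝ) 1)
    (aG b : ℝ → ℝ) (ω : EuclideanSpace ℝ (Fin d) → ℝ)
    (haG : ∀ s, aG s = G' s / s)
    (hb : ∀ r, b r = Ginv ((1 - δ) ^ (d - 1) * r₀ ^ (d - 1) / r ^ (d - 1)))
    (hω : ∀ x : EuclideanSpace ℝ (Fin d), ω x = ∫ r in r₀..‖x‖, b r) :
    (∀ x : EuclideanSpace ℝ (Fin d), ‖x‖ = r₀ → ω x = 0) ∧
      ∀ x : EuclideanSpace ℝ (Fin d), r₀ < ‖x‖ →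
        gradient ω x = (b ‖x‖ / ‖x‖) • x ∧
        aG ‖gradient ω x‖ • gradient ω x
          = ((1 - δ) ^ (d - 1) * r₀ ^ (d - 1) / ‖x‖ ^ d) • x ∧
        diver (fun y => aG ‖gradient ω y‖ • gradient ω y) x = 0 := by
  set c : ℝ := (1 - δ) ^ (d - 1) * r₀ ^ (d - 1) with hc
  have hδ' : 0 < 1 - δ := by linarith [hδ.2]
  have hcpos : 0 < c := by positivity
  have harg : ∀ r, r₀ ≤ r → c / r ^ (d - 1) ∈ Ioo (0 : ℝ) 1 := by
    intro r hr
    have hr' : 0 < r := hr₀.trans_le hr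
    refine ⟨by positivity, ?_⟩
    rw [div_lt_one (by positivity), hc, ← mul_pow]
    refine pow_lt_pow_left₀ ?_ (by positivity) (by omega)
    nlinarith [hδ.1]
  have hbcont : ContinuousOn b (Ici r₀) := by
    rw [funext hb]
    refine hGinvcont.comp (continuousOn_const.div (by fun_prop) fun r hr => ?_)
      fun r hr => Ioo_subset_Ico_self (harg r hr)
    exact pow_ne_zero _ (hr₀.trans_le hr).ne'
  have hgrad : ∀ x : EuclideanSpace ℝ (Fin d), r₀ < ‖x‖ →
      gradient ω x = (b ‖x‖ / ‖x‖) • x := by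
    intro x hx
    have hint : HasDerivAt (fun u => ∫ r in r₀..u, b r) (b ‖x‖) ‖x‖ := by
      refine intervalIntegral.integral_hasDerivAt_right ?_ ?_
        (hbcont.continuousAt (Ici_mem_nhds hx))
      · refine (hbcont.mono ?_).intervalIntegrable
        rw [uIcc_of_le hx.le]
        exact Icc_subset_Ici_self
      · exact (hbcont.mono Ioi_subset_Ici_self).stronglyMeasurableAtFilter isOpen_Ioi _ hx
    rw [funext hω]
    exact (hasGradientAt_comp_norm (norm_pos_iff.mp (hr₀.trans hx)) hint).gradient
  have hflux : ∀ x : EuclideanSpace ℝ (Fin d), r₀ < ‖x‖ →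
      aG ‖gradient ω x‖ • gradient ω x = (c / ‖x‖ ^ d) • x := by
    intro x hx
    have hpos : 0 < ‖x‖ := hr₀.trans hx
    obtain ⟨hG'b, hbpos⟩ := hGinv' _ (harg _ hx.le)
    rw [← hb] at hG'b hbpos
    have hnorm : ‖(b ‖x‖ / ‖x‖) • x‖ = b ‖x‖ := by
      rw [norm_smul, Real.norm_of_nonneg (by positivity), div_mul_cancel₀ _ hpos.ne']
    rw [hgrad x hx, hnorm, haG, hG'b, smul_smul]
    congr 1
    obtain ⟨n, rfl⟩ : ∃ n, d = n + 1 := ⟨d - 1, by omega⟩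
    simp only [Nat.add_sub_cancel]
    field_simp
    ring
  refine ⟨fun x hx => by rw [hω, hx, intervalIntegral.integral_same],
    fun x hx => ⟨hgrad x hx, hflux x hx, ?_⟩⟩
  rw [diver_congr (Y := fun y => (c / ‖y‖ ^ d) • y)]
  · exact diver_div_norm_pow_smul c (norm_pos_iff.mp (hr₀.trans hx))
  · filter_upwards [continuous_norm.continuousAt.eventually (Ioi_mem_nhds hx)] with y hy
    exact hflux y hy
end

section
/- Let d ≥ 2, ε > 0, and let F satisfy the standing assumptions and the normalization (A3); assume in addition that the radial function z ↦ F(|z|) is of class C² on all of ℝ^d. Let Ω ⊂ ℝ^d be a bounded open set and let u ∈ C¹(closure(Ω)) ∩ C³(Ω) satisfy ε Δu(x) + div(a(|∇u|)∇u)(x) = 0 for every x ∈ Ω. Then sup_{closure(Ω)} |∇u| = sup_{∂Ω} |∇u|, i.e. |∇u| attains its maximum on the boundary. -/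
open Set Filter Topology MeasureTheory

theorem hasDerivAt_max_zero_sq (s : ℝ) :
    HasDerivAt (fun t : ℝ => (max t 0) ^ 2) (2 * max s 0) s := by
  rcases lt_trichotomy s 0 with hs | rfl | hs
  · rw [max_eq_right hs.le, mul_zero]
    refine (hasDerivAt_const s (0 : ℝ)).congr_of_eventuallyEq ?_
    filter_upwards [Iio_mem_nhds hs] with t ht
    simp [max_eq_right (mem_Iio.1 ht).le]
  · simp only [max_self, mul_zero]
    rw [hasDerivAt_iff_isLittleO_nhds_zero]
    have hsq : (fun t : ℝ => t ^ 2) =o[𝓝 0] fun t : ℝ => t := by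
      simpa using Asymptotics.isLittleO_pow_id (𝕜 := ℝ) one_lt_two
    refine Asymptotics.IsBigO.trans_isLittleO (Asymptotics.isBigO_of_le _ fun t => ?_) hsq
    rcases le_total t 0 with ht | ht <;> simp [ht, sq_nonneg]
  · rw [max_eq_left hs.le]
    have h := hasDerivAt_pow 2 s
    simp only [Nat.cast_ofNat, Nat.add_one_sub_one, pow_one] at h
    refine h.congr_of_eventuallyEq ?_
    filter_upwards [Ioi_mem_nhds hs] with t ht
    simp [max_eq_left (mem_Ioi.1 ht).le]

theorem contDiff_one_max_zero_sq : ContDiff ℝ 1 (fun t : ℝ => (max t 0) ^ 2) := by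
  rw [contDiff_one_iff_deriv]
  refine ⟨fun s => (hasDerivAt_max_zero_sq s).differentiableAt, ?_⟩
  rw [show deriv (fun t : ℝ => (max t 0) ^ 2) = fun s => 2 * max s 0 from
    funext fun s => (hasDerivAt_max_zero_sq s).deriv]
  fun_prop

section

variable {d : ℕ}

theorem continuous_diver {Y : EuclideanSpace ℝ (Fin d) → EuclideanSpace ℝ (Fin d)}
    (hY : ContDiff ℝ 1 Y) : Continuous (diver Y) := by
  unfold diver
  refine continuous_finsetSum _ fun i _ => ?_
  have hi : ContDiff ℝ 1 fun y => Y y i := contDiff_euclidean.1 hY i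
  exact (hi.continuous_fderiv one_ne_zero).clm_apply continuous_const

theorem diver_eq_zero_of_eventuallyEq_zero
    {Y : EuclideanSpace ℝ (Fin d) → EuclideanSpace ℝ (Fin d)} {x : EuclideanSpace ℝ (Fin d)}
    (hY : Y =ᶠ[𝓝 x] 0) : diver Y x = 0 := by
  refine Finset.sum_eq_zero fun i _ => ?_
  have hi : (fun y => Y y i) =ᶠ[𝓝 x] fun _ => 0 := by
    filter_upwards [hY] with y hy
    simp [hy]
  simp [hi.fderiv_eq]

theorem hasCompactSupport_diver {Y : EuclideanSpace ℝ (Fin d) → EuclideanSpace ℝ (Fin d)}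
    (hY : HasCompactSupport Y) : HasCompactSupport (diver Y) := by
  refine hY.mono' fun x hx => by_contra fun hxY => hx ?_
  exact diver_eq_zero_of_eventuallyEq_zero (notMem_tsupport_iff_eventuallyEq.1 hxY)

theorem integral_diver_eq_zero {Y : EuclideanSpace ℝ (Fin d) → EuclideanSpace ℝ (Fin d)}
    (hY : ContDiff ℝ 1 Y) (hc : HasCompactSupport Y) : ∫ x, diver Y x = 0 := by
  have hi (i : Fin d) : ContDiff ℝ 1 fun y => Y y i := contDiff_euclidean.1 hY i
  have hci (i : Fin d) : HasCompactSupport fun y => Y y i :=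
    hc.comp_left (g := fun z : EuclideanSpace ℝ (Fin d) => z i) rfl
  have hint (i : Fin d) : Integrable
      fun x => fderiv ℝ (fun y => Y y i) x (EuclideanSpace.single i 1) :=
    (((hi i).continuous_fderiv one_ne_zero).clm_apply
      continuous_const).integrable_of_hasCompactSupport ((hci i).fderiv_apply ℝ _)
  unfold diver
  rw [integral_finsetSum _ fun i _ => hint i]
  refine Finset.sum_eq_zero fun i _ => ?_
  have h := integral_mul_fderiv_eq_neg_fderiv_mul_of_integrable (μ := volume)
    (f := fun _ : EuclideanSpace ℝ (Fin d) => (1 : ℝ)) (g := fun y => Y y i)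
    (v := EuclideanSpace.single i 1) (by simp) (by simpa using hint i)
    (by simpa using (hi i).continuous.integrable_of_hasCompactSupport (hci i))
    (fun _ _ => by fun_prop) fun x _ => (hi i).differentiable one_ne_zero x
  simpa using h

theorem diver_smul {f : EuclideanSpace ℝ (Fin d) → ℝ}
    {X : EuclideanSpace ℝ (Fin d) → EuclideanSpace ℝ (Fin d)} {x : EuclideanSpace ℝ (Fin d)}
    (hf : DifferentiableAt ℝ f x) (hX : DifferentiableAt ℝ X x) :
    diver (fun y => f y • X y) x = f x * diver X x + fderiv ℝ f x (X x) := by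
  have hi (i : Fin d) : DifferentiableAt ℝ (fun y => X y i) x := differentiableAt_euclidean.1 hX i
  have hsum : X x = ∑ i, X x i • EuclideanSpace.single i (1 : ℝ) := by
    simpa using ((EuclideanSpace.basisFun (Fin d) ℝ).sum_repr (X x)).symm
  conv_rhs => rw [hsum]
  simp only [diver, PiLp.smul_apply, smul_eq_mul, map_sum, map_smul, Finset.mul_sum,
    ← Finset.sum_add_distrib]
  refine Finset.sum_congr rfl fun i _ => ?_
  rw [fderiv_fun_mul hf (hi i)]
  simp

theorem diver_add {X Y : EuclideanSpace ℝ (Fin d) → EuclideanSpace ℝ (Fin d)}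
    {x : EuclideanSpace ℝ (Fin d)} (hX : DifferentiableAt ℝ X x) (hY : DifferentiableAt ℝ Y x) :
    diver (fun y => X y + Y y) x = diver X x + diver Y x := by
  simp only [diver, PiLp.add_apply, ← Finset.sum_add_distrib]
  refine Finset.sum_congr rfl fun i _ => ?_
  rw [fderiv_fun_add (differentiableAt_euclidean.1 hX i) (differentiableAt_euclidean.1 hY i)]
  simp

theorem diver_const_smul (c : ℝ) {X : EuclideanSpace ℝ (Fin d) → EuclideanSpace ℝ (Fin d)}
    {x : EuclideanSpace ℝ (Fin d)} (hX : DifferentiableAt ℝ X x) :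
    diver (fun y => c • X y) x = c * diver X x := by
  simp [diver_smul (differentiableAt_const c) hX]

theorem diver_sub {X Y : EuclideanSpace ℝ (Fin d) → EuclideanSpace ℝ (Fin d)}
    {x : EuclideanSpace ℝ (Fin d)} (hX : DifferentiableAt ℝ X x) (hY : DifferentiableAt ℝ Y x) :
    diver (fun y => X y - Y y) x = diver X x - diver Y x := by
  have h := diver_add hX (hY.const_smul (-1 : ℝ))
  have h' := diver_const_smul (-1) hY
  simp only [Pi.smul_apply, Pi.smul_def] at h h'
  rw [h'] at h
  simpa [sub_eq_add_neg] using h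

theorem diver_comp_add_right (X : EuclideanSpace ℝ (Fin d) → EuclideanSpace ℝ (Fin d))
    (h x : EuclideanSpace ℝ (Fin d)) : diver (fun y => X (y + h)) x = diver X (x + h) := by
  simp only [diver]
  refine Finset.sum_congr rfl fun i _ => ?_
  rw [fderiv_comp_add_right (f := fun y => X y i)]

theorem gradient_comp_add_right (u : EuclideanSpace ℝ (Fin d) → ℝ)
    (h x : EuclideanSpace ℝ (Fin d)) :
    gradient (fun y => u (y + h)) x = gradient u (x + h) := by
  simp only [gradient, fderiv_comp_add_right]

theorem norm_fderiv_eq_norm_gradient (u : EuclideanSpace ℝ (Fin d) → ℝ)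
    (x : EuclideanSpace ℝ (Fin d)) : ‖fderiv ℝ u x‖ = ‖gradient u x‖ := by
  simp [gradient]

theorem ContDiffAt.gradient {n m : WithTop ℕ∞} {u : EuclideanSpace ℝ (Fin d) → ℝ}
    {x : EuclideanSpace ℝ (Fin d)} (hu : ContDiffAt ℝ m u x) (hnm : n + 1 ≤ m) :
    ContDiffAt ℝ n (gradient u) x :=
  ((InnerProductSpace.toDual ℝ
    (EuclideanSpace ℝ (Fin d))).symm.toContinuousLinearEquiv.contDiff.contDiffAt).comp x
    (hu.fderiv_right hnm)

/-- Comparison principle for divergence-form equations `div (G (∇u)) = 0` with a strongly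
monotone flux `G`: a bound on `v - u` off a compact subset of `T` holds on all of `T`. -/
theorem sub_le_of_diver_flux_eq_zero (hd : 0 < d) {ε : ℝ} (hε : 0 < ε)
    {G : EuclideanSpace ℝ (Fin d) → EuclideanSpace ℝ (Fin d)} (hG : ContDiff ℝ 1 G)
    (hmono : ∀ p q, ε * ‖p - q‖ ^ 2 ≤ inner ℝ (p - q) (G p - G q))
    {T K : Set (EuclideanSpace ℝ (Fin d))} (hT : IsOpen T) (hK : IsCompact K) (hKT : K ⊆ T)
    {u v : EuclideanSpace ℝ (Fin d) → ℝ}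
    (hu : ∀ x ∈ T, ContDiffAt ℝ 2 u x) (hv : ∀ x ∈ T, ContDiffAt ℝ 2 v x)
    (hdu : ∀ x ∈ T, diver (fun y => G (gradient u y)) x = 0)
    (hdv : ∀ x ∈ T, diver (fun y => G (gradient v y)) x = 0)
    {c : ℝ} (hc : ∀ x ∈ T \ K, v x - u x ≤ c) {x : EuclideanSpace ℝ (Fin d)} (hx : x ∈ T) :
    v x - u x ≤ c := by
  set w : EuclideanSpace ℝ (Fin d) → ℝ := fun y => v y - u y - c with hw
  set X : EuclideanSpace ℝ (Fin d) → EuclideanSpace ℝ (Fin d) :=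
    fun y => G (gradient v y) - G (gradient u y)
  set φ : EuclideanSpace ℝ (Fin d) → ℝ := T.indicator fun y => (max (w y) 0) ^ 2 with hφ
  have hφT (y) (hy : y ∈ T) : φ =ᶠ[𝓝 y] fun y => (max (w y) 0) ^ 2 := by
    filter_upwards [hT.mem_nhds hy] with z hz
    exact indicator_of_mem hz _
  have hφK (y) (hy : y ∉ K) : φ y = 0 := by
    by_cases hyT : y ∈ T
    · have : w y ≤ 0 := sub_nonpos.2 (hc y ⟨hyT, hy⟩)
      simp [hφ, hyT, max_eq_right this]
    · simp [hφ, hyT]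
  have hφK' (y) (hy : y ∉ K) : φ =ᶠ[𝓝 y] fun _ => 0 := by
    filter_upwards [hK.isClosed.isOpen_compl.mem_nhds hy] with z hz using hφK z hz
  have hw1 (y) (hy : y ∈ T) : ContDiffAt ℝ 1 w y :=
    (((hv y hy).sub (hu y hy)).sub contDiffAt_const).of_le one_le_two
  have hX1 (y) (hy : y ∈ T) : ContDiffAt ℝ 1 X y :=
    (hG.contDiffAt.comp y (ContDiffAt.gradient (hv y hy) one_add_one_eq_two.le)).sub
      (hG.contDiffAt.comp y (ContDiffAt.gradient (hu y hy) one_add_one_eq_two.le))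
  have hφ1 : ContDiff ℝ 1 φ := contDiff_iff_contDiffAt.2 fun y => by
    by_cases hy : y ∈ K
    · exact (contDiff_one_max_zero_sq.contDiffAt.comp y (hw1 y (hKT hy))).congr_of_eventuallyEq
        (hφT y (hKT hy))
    · exact contDiffAt_const.congr_of_eventuallyEq (hφK' y hy)
  have hY1 : ContDiff ℝ 1 fun y => φ y • X y := contDiff_iff_contDiffAt.2 fun y => by
    by_cases hy : y ∈ K
    · exact hφ1.contDiffAt.smul (hX1 y (hKT hy))
    · refine (contDiffAt_const (c := 0)).congr_of_eventuallyEq ?_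
      filter_upwards [hφK' y hy] with z hz
      simp [hz]
  have hYc : HasCompactSupport fun y => φ y • X y :=
    HasCompactSupport.intro hK fun y hy => by simp [hφK y hy]
  have hdφ (y) (hy : y ∈ T) : fderiv ℝ φ y = (2 * max (w y) 0) • fderiv ℝ w y := by
    rw [(hφT y hy).fderiv_eq]
    exact ((hasDerivAt_max_zero_sq (w y)).comp_hasFDerivAt y
      ((hw1 y hy).differentiableAt one_ne_zero).hasFDerivAt).fderiv
  have hdw (y) (hy : y ∈ T) (z) :
      fderiv ℝ w y z = inner ℝ (gradient v y - gradient u y) z := by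
    have h1 := ((hv y hy).differentiableAt two_ne_zero)
    have h2 := ((hu y hy).differentiableAt two_ne_zero)
    rw [hw, fderiv_sub_const, fderiv_fun_sub h1 h2]
    simp [inner_sub_left]
  have hdivX (y) (hy : y ∈ T) : diver X y = 0 := by
    have h1 := (hG.contDiffAt.comp y (ContDiffAt.gradient (hv y hy)
      one_add_one_eq_two.le)).differentiableAt one_ne_zero
    have h2 := (hG.contDiffAt.comp y (ContDiffAt.gradient (hu y hy)
      one_add_one_eq_two.le)).differentiableAt one_ne_zero
    have h := diver_sub h1 h2
    simp only [Function.comp_apply, Function.comp_def, hdv y hy, hdu y hy, sub_zero] at h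
    exact h
  have hdivT (y) (hy : y ∈ T) : diver (fun y => φ y • X y) y
      = 2 * max (w y) 0 * inner ℝ (gradient v y - gradient u y) (X y) := by
    rw [diver_smul (hφ1.differentiable one_ne_zero y) ((hX1 y hy).differentiableAt one_ne_zero),
      hdivX y hy, hdφ y hy]
    simp [hdw y hy]
  have hdiv0 (y) (hy : y ∉ K) : diver (fun y => φ y • X y) y = 0 := by
    refine diver_eq_zero_of_eventuallyEq_zero ?_
    filter_upwards [hφK' y hy] with z hz
    simp [hz]
  have hlow (y) (hy : y ∈ T) : 2 * max (w y) 0 * (ε * ‖gradient v y - gradient u y‖ ^ 2)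
      ≤ diver (fun y => φ y • X y) y := by
    rw [hdivT y hy]
    exact mul_le_mul_of_nonneg_left (hmono _ _) (by positivity)
  have hnonneg : 0 ≤ diver (fun y => φ y • X y) := fun y => by
    by_cases hy : y ∈ K
    · exact le_trans (by positivity) (hlow y (hKT hy))
    · exact (hdiv0 y hy).ge
  have hzero (y) : diver (fun y => φ y • X y) y = 0 := by
    by_contra hne
    exact ((continuous_diver hY1).integral_pos_of_hasCompactSupport_nonneg_nonzero
      (μ := volume) (hasCompactSupport_diver hYc) hnonneg hne).ne' (integral_diver_eq_zero hY1 hYc)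
  have hφ' (y) : fderiv ℝ φ y = 0 := by
    by_cases hy : y ∈ K
    · have h := hlow y (hKT hy)
      rw [hzero y] at h
      rw [hdφ y (hKT hy)]
      rcases (le_max_right (w y) 0).eq_or_lt with h0 | h0
      · simp [← h0]
      · have hg : gradient v y - gradient u y = 0 := by
          by_contra hne
          have : 0 < ‖gradient v y - gradient u y‖ := norm_pos_iff.2 hne
          have : 0 < 2 * max (w y) 0 * (ε * ‖gradient v y - gradient u y‖ ^ 2) := by positivity
          exact absurd h this.not_ge
        have : fderiv ℝ w y = 0 := ContinuousLinearMap.ext fun z => by simp [hdw y (hKT hy), hg]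
        simp [this]
    · simp [(hφK' y hy).fderiv_eq]
  have : Nonempty (Fin d) := ⟨⟨0, hd⟩⟩
  obtain ⟨z, hz⟩ := (ne_univ_iff_exists_notMem K).1 hK.ne_univ
  have hφx : φ x = 0 :=
    (is_const_of_fderiv_eq_zero (hφ1.differentiable one_ne_zero) hφ' x z).trans (hφK z hz)
  have : max (w x) 0 = 0 := by simpa [hφ, hx] using hφx
  have hwx : w x ≤ 0 := this ▸ le_max_left (w x) 0
  exact sub_nonpos.1 hwx

/-- Gradient maximum principle for `div (G (∇u)) = 0` with a strongly monotone flux `G`. -/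
theorem norm_gradient_le_of_diver_flux_eq_zero (hd : 0 < d) {ε : ℝ} (hε : 0 < ε)
    {G : EuclideanSpace ℝ (Fin d) → EuclideanSpace ℝ (Fin d)} (hG : ContDiff ℝ 1 G)
    (hmono : ∀ p q, ε * ‖p - q‖ ^ 2 ≤ inner ℝ (p - q) (G p - G q))
    {Ω : Set (EuclideanSpace ℝ (Fin d))} (hΩo : IsOpen Ω) (hΩb : Bornology.IsBounded Ω)
    {u : EuclideanSpace ℝ (Fin d) → ℝ} (hgrad : ContinuousOn (gradient u) (closure Ω))
    (hu : ∀ x ∈ Ω, ContDiffAt ℝ 2 u x)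
    (hdu : ∀ x ∈ Ω, diver (fun y => G (gradient u y)) x = 0)
    {m : ℝ} (hm : 0 ≤ m) (hbd : ∀ x ∈ frontier Ω, ‖gradient u x‖ < m)
    {x : EuclideanSpace ℝ (Fin d)} (hx : x ∈ closure Ω) : ‖gradient u x‖ ≤ m := by
  by_contra! hlt
  set L : Set (EuclideanSpace ℝ (Fin d)) := closure Ω ∩ (fun y => ‖gradient u y‖) ⁻¹' Ici m
    with hL
  have hLc : IsCompact L := hΩb.isCompact_closure.of_isClosed_subset
    (hgrad.norm.preimage_isClosed_of_isClosed isClosed_closure isClosed_Ici) inter_subset_left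
  have hLΩ : L ⊆ Ω := fun y hy => by_contra fun hyΩ =>
    (hbd y (hΩo.frontier_eq ▸ ⟨hy.1, hyΩ⟩)).not_ge hy.2
  have hxL : x ∈ L := ⟨hx, hlt.le⟩
  obtain ⟨δ, hδ, hδΩ⟩ := hLc.exists_cthickening_subset_open hΩo hLΩ
  have hmem {y z : EuclideanSpace ℝ (Fin d)} (hy : y ∈ Metric.thickening (2 * (δ / 3)) L)
      (hz : dist z y ≤ δ / 3) : z ∈ Ω := by
    obtain ⟨a, ha, hya⟩ := Metric.mem_thickening_iff.1 hy
    refine hδΩ (Metric.mem_cthickening_of_dist_le z a δ L ha ?_)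
    linarith [dist_triangle z y a]
  have hincr (h : EuclideanSpace ℝ (Fin d)) (hh : ‖h‖ ≤ δ / 3) :
      u (x + h) - u x ≤ m * ‖h‖ := by
    have hshift (y) (hy : y ∈ Metric.thickening (2 * (δ / 3)) L) : y + h ∈ Ω :=
      hmem hy (by simpa using hh)
    have hself (y) (hy : y ∈ Metric.thickening (2 * (δ / 3)) L) : y ∈ Ω :=
      hmem hy (by simpa using by positivity)
    refine sub_le_of_diver_flux_eq_zero (v := fun y => u (y + h)) hd hε hG hmono
      Metric.isOpen_thickening (hLc.cthickening (r := δ / 3))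
      (Metric.cthickening_subset_thickening' (by positivity) (by linarith) L)
      (fun y hy => hu y (hself y hy)) (fun y hy => ?_) (fun y hy => hdu y (hself y hy))
      (fun y hy => ?_) (fun y hy => ?_) (Metric.self_subset_thickening (by positivity) L hxL)
    · exact (hu _ (hshift y hy)).comp y (contDiffAt_id.add contDiffAt_const)
    · simp only [gradient_comp_add_right]
      rw [diver_comp_add_right (fun y => G (gradient u y)), hdu _ (hshift y hy)]
    · have hball (z) (hz : z ∈ Metric.closedBall y ‖h‖) : z ∈ Ω := hmem hy.1 (hz.trans hh)
      have hmv := (convex_closedBall y ‖h‖).norm_image_sub_le_of_norm_fderiv_le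
        (𝕜 := ℝ) (f := u) (C := m) (x := y) (y := y + h)
        (fun z hz => (hu z (hball z hz)).differentiableAt two_ne_zero) (fun z hz => ?_)
        (by simp) (by simp)
      · simpa using (le_abs_self _).trans hmv
      · rw [norm_fderiv_eq_norm_gradient]
        by_contra! hlt'
        refine hy.2 (Metric.mem_cthickening_of_dist_le y z _ L
          ⟨subset_closure (hball z hz), hlt'.le⟩ ?_)
        rw [dist_comm]
        exact le_trans hz hh
  set g := gradient u x with hg
  have hgpos : 0 < ‖g‖ := hm.trans_lt hlt
  have hline := ((hu x (hLΩ hxL)).differentiableAt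
    two_ne_zero).hasFDerivAt.hasLineDerivAt g |>.tendsto_slope_zero_right
  have hle : fderiv ℝ u x g ≤ m * ‖g‖ := by
    refine le_of_tendsto hline ?_
    have hsmall : ∀ᶠ t : ℝ in 𝓝[>] 0, t < δ / 3 / ‖g‖ :=
      nhdsWithin_le_nhds (Iio_mem_nhds (by positivity))
    filter_upwards [hsmall, self_mem_nhdsWithin] with t ht ht0
    have ht0 : 0 < t := ht0
    have hnorm : ‖t • g‖ = t * ‖g‖ := by rw [norm_smul, Real.norm_of_nonneg ht0.le]
    have h := hincr (t • g) (by rw [hnorm]; exact ((lt_div_iff₀ hgpos).1 ht).le)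
    rw [smul_eq_mul, inv_mul_le_iff₀ ht0]
    rw [hnorm] at h
    linarith
  rw [← inner_gradient_left, ← hg, real_inner_self_eq_norm_sq] at hle
  nlinarith

/-- The gradient of a differentiable radial function `z ↦ F ‖z‖`. -/
theorem gradient_radial {F F' : ℝ → ℝ} (hF : ∀ s ∈ Ioi (0 : ℝ), HasDerivAt F (F' s) s)
    (hrad : Differentiable ℝ fun z : EuclideanSpace ℝ (Fin d) => F ‖z‖)
    (z : EuclideanSpace ℝ (Fin d)) :
    gradient (fun z : EuclideanSpace ℝ (Fin d) => F ‖z‖) z = (F' ‖z‖ / ‖z‖) • z := by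
  rcases eq_or_ne z 0 with rfl | hz
  · have h := (hrad 0).hasFDerivAt
    have h' := (show HasFDerivAt (fun z : EuclideanSpace ℝ (Fin d) => F ‖z‖)
      (fderiv ℝ (fun z : EuclideanSpace ℝ (Fin d) => F ‖z‖) 0)
      (-(0 : EuclideanSpace ℝ (Fin d))) by simpa using h).comp 0 (hasFDerivAt_id 0).neg
    simp only [Function.comp_def, norm_neg] at h'
    have heq := h.unique h'
    have h0 : fderiv ℝ (fun z : EuclideanSpace ℝ (Fin d) => F ‖z‖) 0 = 0 := by
      ext y
      have := DFunLike.congr_fun heq y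
      simp at this ⊢
      linarith
    simp [gradient, h0]
  · have hpos : 0 < ‖z‖ := norm_pos_iff.2 hz
    have hsq : HasFDerivAt (fun y : EuclideanSpace ℝ (Fin d) => ‖y‖ ^ 2)
        (2 • innerSL ℝ z) z := (hasStrictFDerivAt_norm_sq z).hasFDerivAt
    have hnorm := hsq.sqrt (by positivity)
    simp only [Real.sqrt_sq (norm_nonneg _)] at hnorm
    have h := (hF ‖z‖ hpos).comp_hasFDerivAt z hnorm
    refine HasGradientAt.gradient (hasGradientAt_iff_hasFDerivAt.2 ?_)
    refine h.congr_fderiv ?_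
    ext y
    simp
    ring

/-- A radial flux `z ↦ f ‖z‖ z / ‖z‖` with `f` nonnegative and nondecreasing is monotone. -/
theorem inner_radial_flux_sub_nonneg {f : ℝ → ℝ} (hf : MonotoneOn f (Ioi 0))
    (hf0 : ∀ s ∈ Ioi (0 : ℝ), 0 ≤ f s) (p q : EuclideanSpace ℝ (Fin d)) :
    0 ≤ inner ℝ (p - q) ((f ‖p‖ / ‖p‖) • p - (f ‖q‖ / ‖q‖) • q) := by
  rcases eq_or_ne p 0 with rfl | hp
  · rcases eq_or_ne q 0 with rfl | hq
    · simp
    · have := hf0 ‖q‖ (norm_pos_iff.2 hq)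
      simp only [zero_sub, smul_zero, inner_neg_neg, inner_smul_right, real_inner_self_eq_norm_sq]
      positivity
  rcases eq_or_ne q 0 with rfl | hq
  · have := hf0 ‖p‖ (norm_pos_iff.2 hp)
    simp only [sub_zero, smul_zero, inner_smul_right, real_inner_self_eq_norm_sq]
    positivity
  have hp' : 0 < ‖p‖ := norm_pos_iff.2 hp
  have hq' : 0 < ‖q‖ := norm_pos_iff.2 hq
  have hfp := hf0 ‖p‖ hp'
  have hfq := hf0 ‖q‖ hq'
  have hmon : 0 ≤ (f ‖p‖ - f ‖q‖) * (‖p‖ - ‖q‖) := by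
    rcases le_total ‖p‖ ‖q‖ with h | h
    · exact mul_nonneg_of_nonpos_of_nonpos (sub_nonpos.2 (hf hp' hq' h)) (sub_nonpos.2 h)
    · exact mul_nonneg (sub_nonneg.2 (hf hq' hp' h)) (sub_nonneg.2 h)
  have hcs : (f ‖p‖ / ‖p‖ + f ‖q‖ / ‖q‖) * inner ℝ p q
      ≤ (f ‖p‖ / ‖p‖ + f ‖q‖ / ‖q‖) * (‖p‖ * ‖q‖) :=
    mul_le_mul_of_nonneg_left (real_inner_le_norm p q) (by positivity)
  have hexp : (f ‖p‖ / ‖p‖ + f ‖q‖ / ‖q‖) * (‖p‖ * ‖q‖) = f ‖p‖ * ‖q‖ + f ‖q‖ * ‖p‖ := by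
    field_simp
  have hpp : f ‖p‖ / ‖p‖ * ‖p‖ ^ 2 = f ‖p‖ * ‖p‖ := by field_simp
  have hqq : f ‖q‖ / ‖q‖ * ‖q‖ ^ 2 = f ‖q‖ * ‖q‖ := by field_simp
  simp only [inner_sub_left, inner_sub_right, inner_smul_right, real_inner_self_eq_norm_sq,
    real_inner_comm p q]
  linarith

end

/-- Gradient maximum principle for the approximate problems: if
`u ∈ C¹(closure Ω) ∩ C³(Ω)` solves `ε Δu + div(a(|∇u|)∇u) = 0` in the bounded open set
`Ω`, then `|∇u|` attains its maximum on the boundary. -/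
theorem stmt_16
    (d : ℕ) (hd : 2 ≤ d) (ε : ℝ) (hε : 0 < ε)
    (F F' F'' : ℝ → ℝ) (C₁ C₂ : ℝ)
    (hC₁ : 0 < C₁) (hC₂ : 0 < C₂)
    (hder1 : ∀ s ∈ Ioi (0:ℝ), HasDerivAt F (F' s) s)
    (hder2 : ∀ s ∈ Ioi (0:ℝ), HasDerivAt F' (F'' s) s)
    (hF''cont : ContinuousOn F'' (Ioi 0))
    (hF''pos : ∀ s ∈ Ioi (0:ℝ), 0 < F'' s)
    (hF'0 : Tendsto F' (nhdsWithin 0 (Ioi 0)) (nhds 0))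
    (hgrowth : ∀ s ∈ Ioi (0:ℝ), C₁ * s - C₂ ≤ F s ∧ F s ≤ C₂ * (1 + s))
    (hosc : ∀ s, 1 ≤ s → ∀ t ∈ Icc (s/2) (2*s), F'' s / F'' t ≤ C₂)
    (hF0 : Tendsto F (nhdsWithin 0 (Ioi 0)) (nhds 0))
    (hF'1 : Tendsto F' atTop (nhds 1))
    (hFrad : ContDiff ℝ 2 (fun z : EuclideanSpace ℝ (Fin d) => F ‖z‖))
    (Ω : Set (EuclideanSpace ℝ (Fin d))) (hΩo : IsOpen Ω) (hΩb : Bornology.IsBounded Ω)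
    (u : EuclideanSpace ℝ (Fin d) → ℝ)
    (hucont : ContinuousOn u (closure Ω))
    (hugradcont : ContinuousOn (gradient u) (closure Ω))
    (hu3 : ContDiffOn ℝ 3 u Ω)
    (heq : ∀ x ∈ Ω,
      ε * diver (gradient u) x +
        diver (fun y => (F' ‖gradient u y‖ / ‖gradient u y‖) • gradient u y) x = 0) :
    sSup ((fun x => ‖gradient u x‖) '' closure Ω)
      = sSup ((fun x => ‖gradient u x‖) '' frontier Ω) := by
  have hmonoF : MonotoneOn F' (Ioi 0) :=
    monotoneOn_of_deriv_nonneg (convex_Ioi 0)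
      (fun s hs => (hder2 s hs).continuousAt.continuousWithinAt)
      (fun s hs => (hder2 s (interior_subset hs)).differentiableAt.differentiableWithinAt)
      fun s hs => by
        rw [(hder2 s (interior_subset hs)).deriv]
        exact (hF''pos s (interior_subset hs)).le
  have hF'nonneg : ∀ s ∈ Ioi (0 : ℝ), 0 ≤ F' s := fun s hs => by
    refine le_of_tendsto hF'0 ?_
    filter_upwards [Ioo_mem_nhdsGT hs] with t ht
    exact hmonoF ht.1 hs ht.2.le
  set A : EuclideanSpace ℝ (Fin d) → EuclideanSpace ℝ (Fin d) :=
    fun z => (F' ‖z‖ / ‖z‖) • z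
  have hA1 : ContDiff ℝ 1 A := by
    rw [show A = gradient (fun z : EuclideanSpace ℝ (Fin d) => F ‖z‖) from
      funext fun z => (gradient_radial hder1 (hFrad.differentiable two_ne_zero) z).symm]
    exact contDiff_iff_contDiffAt.2 fun z => hFrad.contDiffAt.gradient one_add_one_eq_two.le
  have hG1 : ContDiff ℝ 1 fun z => ε • z + A z := (contDiff_id.const_smul ε).add hA1
  have hmono (p q : EuclideanSpace ℝ (Fin d)) :
      ε * ‖p - q‖ ^ 2 ≤ inner ℝ (p - q) ((ε • p + A p) - (ε • q + A q)) := by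
    have h := inner_radial_flux_sub_nonneg hmonoF hF'nonneg p q
    rw [add_sub_add_comm, ← smul_sub, inner_add_right, inner_smul_right,
      real_inner_self_eq_norm_sq]
    linarith
  have hu2 (x) (hx : x ∈ Ω) : ContDiffAt ℝ 2 u x :=
    (hu3.contDiffAt (hΩo.mem_nhds hx)).of_le (by norm_num)
  have hdu (x) (hx : x ∈ Ω) : diver (fun y => ε • gradient u y + A (gradient u y)) x = 0 := by
    have hg : DifferentiableAt ℝ (gradient u) x :=
      ((hu2 x hx).gradient one_add_one_eq_two.le).differentiableAt one_ne_zero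
    have hAg : DifferentiableAt ℝ (fun y => A (gradient u y)) x :=
      (hA1.differentiable one_ne_zero _).comp x hg
    rw [diver_add (hg.fun_const_smul ε) hAg, diver_const_smul ε hg]
    exact heq x hx
  have hbdd : BddAbove ((fun x => ‖gradient u x‖) '' closure Ω) :=
    hΩb.isCompact_closure.bddAbove_image hugradcont.norm
  have hsub : (fun x => ‖gradient u x‖) '' frontier Ω ⊆ (fun x => ‖gradient u x‖) '' closure Ω :=
    image_mono frontier_subset_closure
  have hnonneg (s : Set (EuclideanSpace ℝ (Fin d))) :
      0 ≤ sSup ((fun x => ‖gradient u x‖) '' s) :=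
    Real.sSup_nonneg (forall_mem_image.2 fun _ _ => norm_nonneg _)
  refine le_antisymm (Real.sSup_le (forall_mem_image.2 fun x hx => ?_) (hnonneg _))
    (Real.sSup_le (fun r hr => le_csSup hbdd (hsub hr)) (hnonneg _))
  refine le_of_forall_gt_imp_ge_of_dense fun m hm => ?_
  exact norm_gradient_le_of_diver_flux_eq_zero (by omega) hε hG1 hmono hΩo hΩb hugradcont hu2 hdu
    ((hnonneg _).trans hm.le)
    (fun y hy => (le_csSup (hbdd.mono hsub) (mem_image_of_mem _ hy)).trans_lt hm) hx
end
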